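/- arXiv:1403.0446 — 4 statements merged into one kernel-verified Lean document; each statement's English description precedes it below -/
import Mathlib

section
/- Let z₁, z₂, z₃ be nonzero complex numbers with z₁z₂z₃ = 1 and let n₁ ≥ n₂ ≥ n₃ ≥ 1 be integers with n₂ + n₃ > n₁ + 1. For j = 1, 2, 3 set A_j = ℂ[t^{±1}]/((t − z_j)^{n_j}), and let V = (A₁ ⊗_ℂ A₂ ⊗_ℂ A₃)/H. Then n₂n₃ − (n₂ + n₃ − n₁)(n₂ + n₃ − n₁ − 1)/2 ≤ dim_ℂ V ≤ n₂n₃. -/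
open LaurentPolynomial TensorProduct

set_option synthInstance.maxHeartbeats 1000000
set_option maxHeartbeats 1000000
noncomputable section

abbrev LQuot (K : Type) [Field K] (p : LaurentPolynomial K) : Type :=
  LaurentPolynomial K ⧸ Ideal.span {p}

/-- The class of a Laurent polynomial in the quotient by `(p)`. -/
def clsOf (K : Type) [Field K] (p x : LaurentPolynomial K) : LQuot K p :=
  Ideal.Quotient.mk (Ideal.span {p}) x

abbrev Trip (K : Type) [Field K] (p q r : LaurentPolynomial K) : Type :=
  (LQuot K p ⊗[K] LQuot K q) ⊗[K] LQuot K r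

/-- The holonomy subspace: the `K`-span of the elements
`β₁ ⊗ β₂ ⊗ β₃ - tβ₁ ⊗ tβ₂ ⊗ tβ₃`. -/
def holSub (K : Type) [Field K] (p q r : LaurentPolynomial K) :
    Submodule K (Trip K p q r) :=
  Submodule.span K { x | ∃ (a : LQuot K p) (b : LQuot K q) (c : LQuot K r),
    x = (a ⊗ₜ[K] b) ⊗ₜ[K] c -
      (((T 1 : LaurentPolynomial K) • a) ⊗ₜ[K] ((T 1 : LaurentPolynomial K) • b)) ⊗ₜ[K]
        ((T 1 : LaurentPolynomial K) • c) }

instance (K : Type) [Field K] (p q r : LaurentPolynomial K) : AddCommGroup (Trip K p q r) :=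
  TensorProduct.addCommGroup

/-!
Modulo `H` the first factor can be eliminated, because
`t ^ m a ⊗ b ⊗ c ≡ a ⊗ t ^ (-m) b ⊗ t ^ (-m) c`; hence `A₂ ⊗ A₃` surjects onto `V`, which gives the
upper bound. Conversely, let `t` act on the three factors as `z₁ ((1 + x) (1 + y))⁻¹`,
`z₂ (1 + x)` and `z₃ (1 + y)`. As the product of these is `1` and `(1 + x) (1 + y) - 1 ∈ (x, y)`,
this makes `V` surject onto `K[x, y] / ((x ^ n₂, y ^ n₃) + (x, y) ^ n₁)`. The latter has as basis
the monomials `x ^ i y ^ j` with `i < n₂`, `j < n₃` and `i + j < n₁`, which miss at most a triangle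
of `d (d - 1) / 2` points of the `n₂ × n₃` box, where `d = n₂ + n₃ - n₁`.
-/

section General

universe u

theorem mem_range_of_map_mul_eq_one {A B : Type*} [CommRing A] [IsArtinianRing A] [CommRing B]
    (f : A →+* B) {x : A} {b : B} (h : f x * b = 1) : b ∈ f.range := by
  obtain ⟨n, y, hy⟩ := IsArtinian.exists_pow_succ_smul_dvd x (1 : A)
  have image_hy : f x ^ (n + 1) * f y = f x ^ n := by
    simpa only [smul_eq_mul, map_mul, map_pow, mul_one] using congrArg f hy
  refine ⟨y, ?_⟩
  calc f y = (f x * b) ^ (n + 1) * f y := by rw [h, one_pow, one_mul]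
    _ = b ^ (n + 1) * (f x ^ (n + 1) * f y) := by ring
    _ = (f x * b) ^ n * b := by rw [image_hy]; ring
    _ = b := by rw [h, one_pow, one_mul]

theorem units_inv_sub_one_pow_eq_zero {W : Type*} [CommRing W] {a : Wˣ} {n : ℕ}
    (ha : ((a : W) - 1) ^ n = 0) :
    (((a⁻¹ : Wˣ) : W) - 1) ^ n = 0 := by
  have factor : ((a⁻¹ : Wˣ) : W) - 1 = -(a⁻¹ : Wˣ) * ((a : W) - 1) := by
    linear_combination a.inv_mul
  rw [factor, mul_pow, ha, mul_zero]

theorem mem_of_algebraMap_units_mul_one_add_mem {R W : Type*} [CommRing R] [CommRing W]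
    [Algebra R W] {S : Subalgebra R W} (z : Rˣ) {x : W}
    (hx : algebraMap R W z * (1 + x) ∈ S) : x ∈ S := by
  have smul_eq : ((z⁻¹ : Rˣ) : R) • (algebraMap R W z * (1 + x)) = 1 + x := by
    rw [← Algebra.smul_def, smul_smul, z.inv_mul, one_smul]
  simpa only [smul_eq, add_sub_cancel_left] using
    S.sub_mem (S.smul_mem hx ((z⁻¹ : Rˣ) : R)) S.one_mem

theorem eval₂_units_map_mul_T_one_sub_C_pow {R W : Type*} [CommRing R] [CommRing W] [Algebra R W]
    (z : Rˣ) {a : Wˣ} {n : ℕ} (ha : ((a : W) - 1) ^ n = 0) :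
    eval₂ (algebraMap R W) (Units.map (algebraMap R W) z * a) ((T 1 - C (z : R)) ^ n) = 0 := by
  rw [map_pow, map_sub, eval₂_T, eval₂_C, zpow_one]
  calc (algebraMap R W z * a - algebraMap R W z) ^ n
      = algebraMap R W z ^ n * ((a : W) - 1) ^ n := by rw [← mul_pow, mul_sub_one]
    _ = 0 := by rw [ha, mul_zero]

theorem mk_compl_le_rank_quotient_restrictSupportIdeal {σ R : Type u} [CommRing R] [Nontrivial R]
    (s : Set (σ →₀ ℕ)) (hs : IsUpperSet s) :
    Cardinal.mk ↥sᶜ ≤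
      Module.rank R (MvPolynomial σ R ⧸ MvPolynomial.restrictSupportIdeal R s hs) := by
  let π := (Ideal.Quotient.mkₐ R (MvPolynomial.restrictSupportIdeal R s hs)).toLinearMap
  have disjoint_ker : Disjoint
      (Submodule.span R (Set.range fun m : ↥sᶜ ↦ MvPolynomial.monomial m.1 (1 : R)))
      (LinearMap.ker π) := by
    rw [← Function.comp_def (fun m ↦ MvPolynomial.monomial m (1 : R)), Set.range_comp,
      Subtype.range_coe, ← MvPolynomial.restrictSupport_eq_span, Submodule.disjoint_def]
    intro f hfc hf
    have hfs : (f.support : Set (σ →₀ ℕ)) ⊆ s := Ideal.Quotient.eq_zero_iff_mem.1 hf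
    rw [← MvPolynomial.support_eq_empty, Finset.eq_empty_iff_forall_notMem]
    exact fun m hm ↦ hfc hm (hfs hm)
  exact (((MvPolynomial.basisMonomials σ R).linearIndependent.comp _
    Subtype.val_injective).map disjoint_ker).cardinal_le_rank

theorem card_filter_le_add_le (k m n : ℕ) :
    ((Finset.range m ×ˢ Finset.range n).filter fun x ↦ k ≤ x.1 + x.2).card ≤
      (m + n - k) * (m + n - k - 1) / 2 := by
  have card_triangle : ((Finset.range (m + n - k)).sigma Finset.range).card =
      (m + n - k) * (m + n - k - 1) / 2 := by
    simp only [Finset.card_sigma, Finset.card_range, Finset.sum_range_id]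
  rw [← card_triangle]
  refine Finset.card_le_card_of_injOn (fun x ↦ ⟨m + n - 1 - x.1 - x.2, m - 1 - x.1⟩) ?_ ?_
  · rintro ⟨i, j⟩ hij
    simp only [Finset.mem_coe, Finset.mem_filter, Finset.mem_product, Finset.mem_range] at hij
    simp only [Finset.mem_coe, Finset.mem_sigma, Finset.mem_range]
    omega
  · rintro ⟨i, j⟩ hij ⟨i', j'⟩ hij' heq
    simp only [Finset.mem_coe, Finset.mem_filter, Finset.mem_product, Finset.mem_range]
      at hij hij'
    simp only [Sigma.mk.injEq, heq_eq_eq] at heq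
    ext <;> dsimp only <;> omega

theorem sub_le_card_filter_add_lt (k m n : ℕ) :
    m * n - (m + n - k) * (m + n - k - 1) / 2 ≤
      ((Finset.range m ×ˢ Finset.range n).filter fun x ↦ x.1 + x.2 < k).card := by
  have card_split := Finset.card_filter_add_card_filter_not
    (s := Finset.range m ×ˢ Finset.range n) (fun x ↦ x.1 + x.2 < k)
  simp only [not_lt, Finset.card_product, Finset.card_range] at card_split
  have card_above := card_filter_le_add_le k m n
  omega

end General

namespace LQuot

variable {K : Type} [Field K]

section Lift

variable {W : Type*} [CommRing W] [Algebra K W] {p : LaurentPolynomial K}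

/-- The universal property of `K[t^{±1}]/(p)`: the algebra map sending `t` to a unit `u` which is
a zero of `p`. -/
def lift (u : Wˣ) (hu : eval₂ (algebraMap K W) u p = 0) : LQuot K p →ₐ[K] W :=
  Ideal.Quotient.liftₐ (Ideal.span {p})
    { eval₂ (algebraMap K W) u with commutes' := eval₂_C (algebraMap K W) u }
    fun x hx ↦ by
      obtain ⟨y, rfl⟩ := Ideal.mem_span_singleton.1 hx
      exact (map_mul (eval₂ (algebraMap K W) u) p y).trans (by rw [hu, zero_mul])

theorem lift_mk (u : Wˣ) (hu : eval₂ (algebraMap K W) u p = 0) (x : LaurentPolynomial K) :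
    lift u hu (Ideal.Quotient.mk _ x) = eval₂ (algebraMap K W) u x :=
  rfl

theorem lift_T_one_smul (u : Wˣ) (hu : eval₂ (algebraMap K W) u p = 0) (a : LQuot K p) :
    lift u hu ((T 1 : LaurentPolynomial K) • a) = u * lift u hu a := by
  obtain ⟨x, rfl⟩ := Ideal.Quotient.mk_surjective a
  exact (map_mul (eval₂ (algebraMap K W) u) (T 1) x).trans (by rw [eval₂_T, zpow_one, lift_mk])

theorem mk_C_mul_T (z : K) (m : ℤ) :
    (Ideal.Quotient.mk (Ideal.span {p}) (C z * T m) : LQuot K p) =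
      (T m : LaurentPolynomial K) • z • 1 := by
  rw [smul_comm, ← smul_eq_C_mul]
  exact congrArg (fun x ↦ z • Ideal.Quotient.mk (Ideal.span {p}) x) (mul_one (T m)).symm

end Lift

/-- The comparison map from the polynomial quotient `K[X]/(f)` to the Laurent polynomial quotient
`K[t^{±1}]/(f)`, sending `X` to `t`. -/
def ofAdjoinRoot (f : Polynomial K) : AdjoinRoot f →ₐ[K] LQuot K (Polynomial.toLaurent f) :=
  Ideal.quotientMapₐ _ Polynomial.toLaurentAlg (by simp [Ideal.span_le])

theorem ofAdjoinRoot_mk (f g : Polynomial K) :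
    ofAdjoinRoot f (AdjoinRoot.mk f g) = Ideal.Quotient.mk _ (Polynomial.toLaurent g) :=
  rfl

theorem ofAdjoinRoot_surjective {f : Polynomial K} (hf : f ≠ 0) :
    Function.Surjective (ofAdjoinRoot f) := by
  have : Module.Finite K (AdjoinRoot f) := (AdjoinRoot.powerBasis hf).finite
  have : IsArtinianRing (AdjoinRoot f) := IsArtinianRing.of_finite K _
  have inv_mem_range : Ideal.Quotient.mk _ (T (-1)) ∈ (ofAdjoinRoot f).toRingHom.range := by
    refine mem_range_of_map_mul_eq_one _ (x := AdjoinRoot.mk f Polynomial.X) ?_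
    change ofAdjoinRoot f (AdjoinRoot.mk f Polynomial.X) * _ = 1
    rw [ofAdjoinRoot_mk, Polynomial.toLaurent_X, ← map_mul, ← T_add, add_neg_cancel, T_zero,
      map_one]
  intro a
  obtain ⟨x, rfl⟩ := Ideal.Quotient.mk_surjective a
  change _ ∈ (ofAdjoinRoot f).toRingHom.range
  induction x using reduce_to_polynomial_of_mul_T with
  | Qf g => exact ⟨AdjoinRoot.mk f g, ofAdjoinRoot_mk f g⟩
  | QT x hx =>
    have mul_mem_range := mul_mem hx inv_mem_range
    rwa [← map_mul, mul_T_assoc, add_neg_cancel, T_zero, mul_one] at mul_mem_range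

theorem rank_toLaurent_le {f : Polynomial K} (hf : f ≠ 0) :
    Module.rank K (LQuot K (Polynomial.toLaurent f)) ≤ f.natDegree := by
  refine (LinearMap.rank_le_of_surjective (ofAdjoinRoot f).toLinearMap
    (ofAdjoinRoot_surjective hf)).trans_eq ?_
  rw [rank_eq_card_basis (AdjoinRoot.powerBasis hf).basis, Fintype.card_fin,
    AdjoinRoot.powerBasis_dim]

theorem rank_T_one_sub_C_pow_le (z : K) (n : ℕ) :
    Module.rank K (LQuot K ((T 1 - C z) ^ n)) ≤ n := by
  have rank_le := rank_toLaurent_le (pow_ne_zero n (Polynomial.X_sub_C_ne_zero z))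
  rwa [map_pow, map_sub, Polynomial.toLaurent_X, Polynomial.toLaurent_C,
    Polynomial.natDegree_pow, Polynomial.natDegree_X_sub_C, mul_one] at rank_le

end LQuot

section UpperBound

variable {K : Type} [Field K] {p q r : LaurentPolynomial K}

theorem mkQ_holSub_T_one_smul (a : LQuot K p) (b : LQuot K q) (c : LQuot K r) :
    (holSub K p q r).mkQ ((((T 1 : LaurentPolynomial K) • a) ⊗ₜ
      ((T 1 : LaurentPolynomial K) • b)) ⊗ₜ ((T 1 : LaurentPolynomial K) • c)) =
      (holSub K p q r).mkQ ((a ⊗ₜ b) ⊗ₜ c) :=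
  ((Submodule.Quotient.eq (holSub K p q r)).2 (Submodule.subset_span ⟨a, b, c, rfl⟩)).symm

theorem mkQ_holSub_T_smul (m : ℤ) (a : LQuot K p) (b : LQuot K q) (c : LQuot K r) :
    (holSub K p q r).mkQ ((((T m : LaurentPolynomial K) • a) ⊗ₜ
      ((T m : LaurentPolynomial K) • b)) ⊗ₜ ((T m : LaurentPolynomial K) • c)) =
      (holSub K p q r).mkQ ((a ⊗ₜ b) ⊗ₜ c) := by
  induction m with
  | zero => simp only [T_zero, one_smul]
  | succ m ih => simp only [add_comm (m : ℤ), T_add, mul_smul, mkQ_holSub_T_one_smul, ih]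
  | pred m ih =>
    rw [← mkQ_holSub_T_one_smul]
    simpa only [smul_smul, ← T_add, add_sub_cancel] using ih

theorem mkQ_holSub_T_smul_tmul (m : ℤ) (a : LQuot K p) (b : LQuot K q) (c : LQuot K r) :
    (holSub K p q r).mkQ ((((T m : LaurentPolynomial K) • a) ⊗ₜ b) ⊗ₜ c) =
      (holSub K p q r).mkQ ((a ⊗ₜ ((T (-m) : LaurentPolynomial K) • b)) ⊗ₜ
        ((T (-m) : LaurentPolynomial K) • c)) := by
  rw [← mkQ_holSub_T_smul m a]
  simp only [smul_smul _ _ b, smul_smul _ _ c, ← T_add, add_neg_cancel, T_zero, one_smul]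

theorem mkQ_holSub_tmul_mem {N : Submodule K (Trip K p q r ⧸ holSub K p q r)}
    (hN : ∀ b c, (holSub K p q r).mkQ ((1 ⊗ₜ b) ⊗ₜ c) ∈ N)
    (a : LQuot K p) (b : LQuot K q) (c : LQuot K r) :
    (holSub K p q r).mkQ ((a ⊗ₜ b) ⊗ₜ c) ∈ N := by
  obtain ⟨x, rfl⟩ := Ideal.Quotient.mk_surjective a
  induction x using LaurentPolynomial.induction_on' with
  | add x y hx hy =>
    rw [map_add, add_tmul, add_tmul, map_add]
    exact add_mem hx hy
  | C_mul_T m z =>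
    rw [LQuot.mk_C_mul_T, mkQ_holSub_T_smul_tmul, ← smul_tmul', ← smul_tmul', map_smul]
    exact N.smul_mem z (hN _ _)

theorem eq_top_of_mkQ_holSub_one_tmul_mem {N : Submodule K (Trip K p q r ⧸ holSub K p q r)}
    (hN : ∀ b c, (holSub K p q r).mkQ ((1 ⊗ₜ b) ⊗ₜ c) ∈ N) : N = ⊤ := by
  have mkQ_comp_eq_zero : N.mkQ ∘ₗ (holSub K p q r).mkQ = 0 :=
    TensorProduct.ext_threefold fun a b c ↦
      (Submodule.Quotient.mk_eq_zero N).2 (mkQ_holSub_tmul_mem hN a b c)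
  rwa [← LinearMap.range_le_ker_iff, Submodule.range_mkQ, Submodule.ker_mkQ, top_le_iff]
    at mkQ_comp_eq_zero

theorem rank_quotient_holSub_le :
    Module.rank K (Trip K p q r ⧸ holSub K p q r) ≤
      Module.rank K (LQuot K q) * Module.rank K (LQuot K r) := by
  let φ : LQuot K q ⊗[K] LQuot K r →ₗ[K] Trip K p q r ⧸ holSub K p q r :=
    (holSub K p q r).mkQ ∘ₗ (TensorProduct.assoc K _ _ _).symm.toLinearMap ∘ₗ
      TensorProduct.mk K (LQuot K p) (LQuot K q ⊗[K] LQuot K r) 1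
  have φ_surjective : Function.Surjective φ :=
    LinearMap.range_eq_top.1 (eq_top_of_mkQ_holSub_one_tmul_mem fun b c ↦ ⟨b ⊗ₜ c, rfl⟩)
  exact (LinearMap.rank_le_of_surjective φ φ_surjective).trans_eq rank_tensorProduct'

end UpperBound

section LowerBound

variable {K W : Type} [Field K] [CommRing W] [Algebra K W]

theorem rank_le_rank_quotient_holSub {p q r : LaurentPolynomial K} {u v w : Wˣ}
    (hu : eval₂ (algebraMap K W) u p = 0) (hv : eval₂ (algebraMap K W) v q = 0)
    (hw : eval₂ (algebraMap K W) w r = 0) (huvw : u * v * w = 1)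
    (hadj : Algebra.adjoin K {(v : W), (w : W)} = ⊤) :
    Module.rank K W ≤ Module.rank K (Trip K p q r ⧸ holSub K p q r) := by
  -- Not ascribed to `Trip K p q r`, whose instances agree with those of the algebra
  -- `(_ ⊗ _) ⊗ _` only after unfolding.
  let φ := Algebra.TensorProduct.productMap
    (Algebra.TensorProduct.productMap (LQuot.lift u hu) (LQuot.lift v hv)) (LQuot.lift w hw)
  have φ_tmul a b c : φ ((a ⊗ₜ b) ⊗ₜ c) =
      LQuot.lift u hu a * LQuot.lift v hv b * LQuot.lift w hw c := by
    simp only [φ, Algebra.TensorProduct.productMap_apply_tmul]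
  have φ_surjective : Function.Surjective φ := by
    rw [← AlgHom.range_eq_top, eq_top_iff, ← hadj, Algebra.adjoin_le_iff]
    rintro _ (rfl | rfl)
    · exact ⟨(1 ⊗ₜ Ideal.Quotient.mk _ (T 1)) ⊗ₜ 1, by simp [φ_tmul, LQuot.lift_mk]⟩
    · exact ⟨(1 ⊗ₜ 1) ⊗ₜ Ideal.Quotient.mk _ (T 1), by simp [φ_tmul, LQuot.lift_mk]⟩
  have holSub_le_ker : holSub K p q r ≤ LinearMap.ker φ.toLinearMap := by
    refine Submodule.span_le.2 ?_
    rintro _ ⟨a, b, c, rfl⟩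
    have huvw_val : (u : W) * v * w = 1 := congrArg Units.val huvw
    rw [SetLike.mem_coe, LinearMap.mem_ker, map_sub, sub_eq_zero]
    refine (φ_tmul a b c).trans (Eq.trans ?_ (φ_tmul _ _ _).symm)
    rw [LQuot.lift_T_one_smul, LQuot.lift_T_one_smul, LQuot.lift_T_one_smul]
    linear_combination (-(LQuot.lift u hu a * LQuot.lift v hv b * LQuot.lift w hw c)) * huvw_val
  refine LinearMap.rank_le_of_surjective
    ((holSub K p q r).liftQ φ.toLinearMap holSub_le_ker) ?_
  rw [← LinearMap.range_eq_top, Submodule.range_liftQ]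
  exact LinearMap.range_eq_top.2 φ_surjective

theorem rank_le_rank_quotient_holSub_of_pow_eq_zero {z₁ z₂ z₃ : Kˣ} (hz : z₁ * z₂ * z₃ = 1)
    {n₁ n₂ n₃ : ℕ} {x y : W} (hx : x ^ n₂ = 0) (hy : y ^ n₃ = 0)
    (hxy : ((1 + x) * (1 + y) - 1) ^ n₁ = 0) (hadj : Algebra.adjoin K {x, y} = ⊤) :
    Module.rank K W ≤ Module.rank K
      (Trip K ((T 1 - C (z₁ : K)) ^ n₁) ((T 1 - C (z₂ : K)) ^ n₂) ((T 1 - C (z₃ : K)) ^ n₃) ⧸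
        holSub K ((T 1 - C (z₁ : K)) ^ n₁) ((T 1 - C (z₂ : K)) ^ n₂)
          ((T 1 - C (z₃ : K)) ^ n₃)) := by
  obtain ⟨a, ha⟩ := IsNilpotent.isUnit_one_add ⟨n₂, hx⟩
  obtain ⟨b, hb⟩ := IsNilpotent.isUnit_one_add ⟨n₃, hy⟩
  let ι : Kˣ →* Wˣ := Units.map (algebraMap K W)
  refine rank_le_rank_quotient_holSub (u := ι z₁ * (a * b)⁻¹) (v := ι z₂ * a) (w := ι z₃ * b)
    (eval₂_units_map_mul_T_one_sub_C_pow z₁ (units_inv_sub_one_pow_eq_zero ?_))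
    (eval₂_units_map_mul_T_one_sub_C_pow z₂ (by rwa [ha, add_sub_cancel_left]))
    (eval₂_units_map_mul_T_one_sub_C_pow z₃ (by rwa [hb, add_sub_cancel_left])) ?_ ?_
  · rwa [Units.val_mul, ha, hb]
  · calc ι z₁ * (a * b)⁻¹ * (ι z₂ * a) * (ι z₃ * b)
        = ι z₁ * ι z₂ * ι z₃ * ((a * b)⁻¹ * (a * b)) := by ac_rfl
      _ = 1 := by rw [← map_mul, ← map_mul, hz, map_one, inv_mul_cancel, one_mul]
  · rw [eq_top_iff, ← hadj, Algebra.adjoin_le_iff]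
    rintro _ (rfl | rfl)
    · exact mem_of_algebraMap_units_mul_one_add_mem z₂
        (ha ▸ Algebra.subset_adjoin (by simp [ι]))
    · exact mem_of_algebraMap_units_mul_one_add_mem z₃
        (hb ▸ Algebra.subset_adjoin (by simp [ι]))

end LowerBound

section Staircase

/-- The exponents of the monomials in the ideal `(X₀ ^ n₂, X₁ ^ n₃) + (X₀, X₁) ^ n₁`. -/
def staircase (n₁ n₂ n₃ : ℕ) : Set (Fin 2 →₀ ℕ) :=
  {m | n₂ ≤ m 0 ∨ n₃ ≤ m 1 ∨ n₁ ≤ m.degree}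

theorem isUpperSet_staircase (n₁ n₂ n₃ : ℕ) : IsUpperSet (staircase n₁ n₂ n₃) := fun _ _ h ↦
  Or.imp (h 0).trans' (Or.imp (h 1).trans' (Finsupp.degree_mono h).trans')

theorem card_filter_add_lt_le_mk_compl_staircase (n₁ n₂ n₃ : ℕ) :
    (((Finset.range n₂ ×ˢ Finset.range n₃).filter fun x ↦ x.1 + x.2 < n₁).card : Cardinal) ≤
      Cardinal.mk ↥(staircase n₁ n₂ n₃)ᶜ := by
  rw [← Cardinal.mk_coe_finset]
  refine Cardinal.mk_le_of_injective
    (f := fun x ↦ ⟨Finsupp.equivFunOnFinite.symm ![x.1.1, x.1.2], ?_⟩) ?_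
  · have hx := x.2
    simp only [Finset.mem_filter, Finset.mem_product, Finset.mem_range] at hx
    simpa [staircase, Finsupp.degree_eq_sum, and_assoc] using hx
  · intro x y hxy
    have exponent_eq := Finsupp.equivFunOnFinite.symm.injective (congrArg Subtype.val hxy)
    exact Subtype.ext (Prod.ext (congrFun exponent_eq 0) (congrFun exponent_eq 1))

open MvPolynomial

theorem adjoin_mk_X_eq_top {R : Type*} [CommRing R] (I : Ideal (MvPolynomial (Fin 2) R)) :
    Algebra.adjoin R {Ideal.Quotient.mk I (X 0), Ideal.Quotient.mk I (X 1)} = ⊤ := by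
  have range_X : Set.range (X : Fin 2 → MvPolynomial (Fin 2) R) = {X 0, X 1} := by
    ext; simp [Fin.exists_fin_two, eq_comm]
  have map_adjoin := AlgHom.map_adjoin (Ideal.Quotient.mkₐ R I) {X 0, X 1}
  rw [← range_X, adjoin_range_X, Algebra.map_top, range_X, Set.image_pair,
    (AlgHom.range_eq_top _).2 (Ideal.Quotient.mkₐ_surjective R I)] at map_adjoin
  exact map_adjoin.symm

variable (R : Type*) [CommRing R] (n₁ n₂ n₃ : ℕ)

/-- The monomial ideal `(X₀ ^ n₂, X₁ ^ n₃) + (X₀, X₁) ^ n₁`, encoded by the support of its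
elements. -/
abbrev staircaseIdeal : Ideal (MvPolynomial (Fin 2) R) :=
  restrictSupportIdeal R (staircase n₁ n₂ n₃) (isUpperSet_staircase n₁ n₂ n₃)

theorem X_zero_pow_mem_staircaseIdeal : X 0 ^ n₂ ∈ staircaseIdeal R n₁ n₂ n₃ := by
  rw [X_pow_eq_monomial]
  exact (monomial_mem_restrictSupport R).2 (.inl (by simp [staircase]))

theorem X_one_pow_mem_staircaseIdeal : X 1 ^ n₃ ∈ staircaseIdeal R n₁ n₂ n₃ := by
  rw [X_pow_eq_monomial]
  exact (monomial_mem_restrictSupport R).2 (.inl (by simp [staircase]))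

theorem idealOfVars_pow_le_staircaseIdeal :
    idealOfVars (Fin 2) R ^ n₁ ≤ staircaseIdeal R n₁ n₂ n₃ := fun f hf m hm ↦
  .inr (.inr ((mem_pow_idealOfVars_iff n₁ f).1 hf m hm))

theorem one_add_X_mul_one_add_X_sub_one_pow_mem_staircaseIdeal :
    ((1 + X 0) * (1 + X 1) - 1) ^ n₁ ∈ staircaseIdeal R n₁ n₂ n₃ := by
  refine idealOfVars_pow_le_staircaseIdeal R n₁ n₂ n₃ (Ideal.pow_mem_pow ?_ n₁)
  have X_mem (i : Fin 2) : X i ∈ idealOfVars (Fin 2) R := Ideal.subset_span ⟨i, rfl⟩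
  have expand : ((1 + X 0) * (1 + X 1) - 1 : MvPolynomial (Fin 2) R) =
      (1 + X 1) * X 0 + X 1 := by ring
  exact expand ▸ add_mem (Ideal.mul_mem_left _ _ (X_mem 0)) (X_mem 1)

end Staircase

theorem rank_quotient_staircaseIdeal_le_rank_quotient_holSub {K : Type} [Field K] {z₁ z₂ z₃ : Kˣ}
    (hz : z₁ * z₂ * z₃ = 1) (n₁ n₂ n₃ : ℕ) :
    Module.rank K (MvPolynomial (Fin 2) K ⧸ staircaseIdeal K n₁ n₂ n₃) ≤ Module.rank K
      (Trip K ((T 1 - C (z₁ : K)) ^ n₁) ((T 1 - C (z₂ : K)) ^ n₂) ((T 1 - C (z₃ : K)) ^ n₃) ⧸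
        holSub K ((T 1 - C (z₁ : K)) ^ n₁) ((T 1 - C (z₂ : K)) ^ n₂)
          ((T 1 - C (z₃ : K)) ^ n₃)) := by
  refine rank_le_rank_quotient_holSub_of_pow_eq_zero hz ?_ ?_ ?_ (adjoin_mk_X_eq_top _)
  · exact Ideal.Quotient.eq_zero_iff_mem.2 (X_zero_pow_mem_staircaseIdeal K n₁ n₂ n₃)
  · exact Ideal.Quotient.eq_zero_iff_mem.2 (X_one_pow_mem_staircaseIdeal K n₁ n₂ n₃)
  · exact Ideal.Quotient.eq_zero_iff_mem.2
      (one_add_X_mul_one_add_X_sub_one_pow_mem_staircaseIdeal K n₁ n₂ n₃)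

/-- The subtractions truncate harmlessly: for `n₂ + n₃ ≤ n₁` the correction is genuinely `0`. -/
theorem stmt9_general {K : Type} [Field K] {z₁ z₂ z₃ : K} (hprod : z₁ * z₂ * z₃ = 1)
    (n₁ n₂ n₃ : ℕ) :
    ((n₂ * n₃ - (n₂ + n₃ - n₁) * (n₂ + n₃ - n₁ - 1) / 2 : ℕ) : Cardinal) ≤
        Module.rank K
          (Trip K ((T 1 - C z₁) ^ n₁) ((T 1 - C z₂) ^ n₂) ((T 1 - C z₃) ^ n₃) ⧸
            holSub K ((T 1 - C z₁) ^ n₁) ((T 1 - C z₂) ^ n₂) ((T 1 - C z₃) ^ n₃)) ∧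
      Module.rank K
          (Trip K ((T 1 - C z₁) ^ n₁) ((T 1 - C z₂) ^ n₂) ((T 1 - C z₃) ^ n₃) ⧸
            holSub K ((T 1 - C z₁) ^ n₁) ((T 1 - C z₂) ^ n₂) ((T 1 - C z₃) ^ n₃)) ≤
        ((n₂ * n₃ : ℕ) : Cardinal) := by
  constructor
  · have hz₁₂ : z₁ * z₂ ≠ 0 := left_ne_zero_of_mul_eq_one hprod
    lift z₁ to Kˣ using (left_ne_zero_of_mul hz₁₂).isUnit
    lift z₂ to Kˣ using (right_ne_zero_of_mul hz₁₂).isUnit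
    lift z₃ to Kˣ using (right_ne_zero_of_mul_eq_one hprod).isUnit
    calc ((n₂ * n₃ - (n₂ + n₃ - n₁) * (n₂ + n₃ - n₁ - 1) / 2 : ℕ) : Cardinal)
        ≤ ((Finset.range n₂ ×ˢ Finset.range n₃).filter fun x ↦ x.1 + x.2 < n₁).card :=
          Nat.cast_le.2 (sub_le_card_filter_add_lt n₁ n₂ n₃)
      _ ≤ Cardinal.mk ↥(staircase n₁ n₂ n₃)ᶜ :=
        card_filter_add_lt_le_mk_compl_staircase n₁ n₂ n₃
      _ ≤ Module.rank K (MvPolynomial (Fin 2) K ⧸ staircaseIdeal K n₁ n₂ n₃) :=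
        mk_compl_le_rank_quotient_restrictSupportIdeal _ _
      _ ≤ _ := rank_quotient_staircaseIdeal_le_rank_quotient_holSub
        (Units.ext hprod) n₁ n₂ n₃
  · rw [Nat.cast_mul]
    exact rank_quotient_holSub_le.trans (mul_le_mul' (LQuot.rank_T_one_sub_C_pow_le z₂ n₂)
      (LQuot.rank_T_one_sub_C_pow_le z₃ n₃))

theorem stmt9 (z₁ z₂ z₃ : ℂ) (hz₁ : z₁ ≠ 0) (hz₂ : z₂ ≠ 0) (hz₃ : z₃ ≠ 0)
    (hprod : z₁ * z₂ * z₃ = 1) (n₁ n₂ n₃ : ℕ) (hn₃ : 1 ≤ n₃) (hn₂₃ : n₃ ≤ n₂)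
    (hn₁₂ : n₂ ≤ n₁) (hbig : n₁ + 1 < n₂ + n₃) :
    ((n₂ * n₃ - (n₂ + n₃ - n₁) * (n₂ + n₃ - n₁ - 1) / 2 : ℕ) : Cardinal) ≤
        Module.rank ℂ
          (Trip ℂ ((T 1 - C z₁) ^ n₁) ((T 1 - C z₂) ^ n₂) ((T 1 - C z₃) ^ n₃) ⧸
            holSub ℂ ((T 1 - C z₁) ^ n₁) ((T 1 - C z₂) ^ n₂) ((T 1 - C z₃) ^ n₃)) ∧
      Module.rank ℂ
          (Trip ℂ ((T 1 - C z₁) ^ n₁) ((T 1 - C z₂) ^ n₂) ((T 1 - C z₃) ^ n₃) ⧸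
            holSub ℂ ((T 1 - C z₁) ^ n₁) ((T 1 - C z₂) ^ n₂) ((T 1 - C z₃) ^ n₃)) ≤
        ((n₂ * n₃ : ℕ) : Cardinal) :=
  stmt9_general hprod n₁ n₂ n₃
end
end

section
/- Let R = ℚ[t₁^{±1}, t₂^{±1}, t₃^{±1}] be the Laurent polynomial ring in three variables over ℚ (equivalently, the group algebra of ℤ³ over ℚ), on which the symmetric group S₃ acts by ℚ-algebra automorphisms permuting the variables t₁, t₂, t₃. Let R^a = {P ∈ R : σ·P = ε(σ)P for all σ ∈ S₃}, where ε denotes the signature, and let R^s ⊆ R be the ℚ-linear span of all P ∈ R such that τ·P = P for some transposition τ ∈ S₃. Then R is the internal direct sum R = R^s ⊕ R^a, i.e. R^s ∩ R^a = 0 and R^s + R^a = R. -/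
open LaurentPolynomial

set_option synthInstance.maxHeartbeats 1000000
set_option maxHeartbeats 1000000
noncomputable section

/-- The Laurent polynomial ring in three variables over `ℚ`, realized as the monoid algebra
of the additive group `ℤ³`. -/
abbrev R3 : Type := AddMonoidAlgebra ℚ (Fin 3 → ℤ)

/-- The additive automorphism of `ℤ³` permuting the coordinates according to `σ`. -/
def permAddEquiv (σ : Equiv.Perm (Fin 3)) : (Fin 3 → ℤ) ≃+ (Fin 3 → ℤ) :=
  { Equiv.arrowCongr σ (Equiv.refl ℤ) with map_add' := fun _ _ => rfl }

/-- The action of `σ ∈ S₃` on `R3`, permuting the three variables. -/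
def permAct (σ : Equiv.Perm (Fin 3)) : R3 ≃ₐ[ℚ] R3 :=
  AddMonoidAlgebra.domCongr ℚ ℚ (permAddEquiv σ)

/-- The antisymmetric part `R^a`: the subspace of elements `P` with `σ·P = ε(σ)P` for all
`σ ∈ S₃`. -/
def Ra : Submodule ℚ R3 :=
  ⨅ σ : Equiv.Perm (Fin 3),
    LinearMap.ker ((permAct σ).toLinearMap - (Equiv.Perm.sign σ : ℤ) • LinearMap.id)

/-- The subspace `R^s`: the span of the elements fixed by some transposition. -/
def Rs : Submodule ℚ R3 :=
  Submodule.span ℚ { P : R3 | ∃ τ : Equiv.Perm (Fin 3), τ.IsSwap ∧ permAct τ P = P }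

/-!
Twisting a representation `ρ` of a finite group `G` by a character `χ : G → {±1}` turns the vectors
on which `G` acts through `χ` into invariants. When `|G|` is invertible, averaging projects onto the
invariants with kernel the span of the vectors `ρ g v - v`, and it suffices to let `g` run through
a generating set. If `s` is an involution with `χ s = -1`, then for the twisted action these vectors
are `-(ρ s v + v)`; as the order `2` of `s` divides `|G|` and so is invertible, they are exactly the
vectors fixed by `ρ s`. For `S₃`, the signature and the transpositions, the kernel is therefore
`R^s` and the image is `R^a`.
-/

open Representation

section Representation

variable {k G V : Type*} [CommRing k] [Group G] [AddCommGroup V] [Module k V]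

theorem coinvariantsKer_eq_ker_averageMap [Fintype G] [Invertible (Fintype.card G : k)]
    (ρ : Representation k G V) : Coinvariants.ker ρ = LinearMap.ker ρ.averageMap := by
  apply le_antisymm
  · refine Submodule.span_le.2 ?_
    rintro _ ⟨⟨g, v⟩, rfl⟩
    have averageMap_apply_rho : ρ.averageMap (ρ g v) = ρ.averageMap v := by
      rw [averageMap, ← asAlgebraHom_single_one, ← Module.End.mul_apply, ← map_mul,
        GroupAlgebra.mul_average_right]
    simp only [SetLike.mem_coe, LinearMap.mem_ker, map_sub, averageMap_apply_rho, sub_self]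
  · intro v hv
    have average_sub : ρ.averageMap v - v =
        ⅟(Fintype.card G : k) • ∑ g, (ρ g v - v) := by
      simp [GroupAlgebra.average, smul_sub, ← Nat.cast_smul_eq_nsmul k, smul_smul]
    have average_sub_mem : ρ.averageMap v - v ∈ Coinvariants.ker ρ :=
      average_sub ▸ Submodule.smul_mem _ _
        (Submodule.sum_mem _ fun g _ ↦ Coinvariants.sub_mem_ker g v)
    rwa [LinearMap.mem_ker.1 hv, zero_sub, neg_mem_iff] at average_sub_mem

theorem isCompl_invariants_coinvariantsKer [Fintype G] [Invertible (Fintype.card G : k)]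
    (ρ : Representation k G V) : IsCompl ρ.invariants (Coinvariants.ker ρ) :=
  coinvariantsKer_eq_ker_averageMap ρ ▸ ρ.isProj_averageMap.isCompl

theorem coinvariantsKer_le_of_closure_eq_top {ρ : Representation k G V} {S : Set G}
    (hS : Subgroup.closure S = ⊤) {W : Submodule k V} (hW : ∀ s ∈ S, ∀ v, ρ s v - v ∈ W) :
    Coinvariants.ker ρ ≤ W := by
  refine Submodule.span_le.2 ?_
  rintro _ ⟨⟨g, v⟩, rfl⟩
  have hg : g ∈ Subgroup.closure S := hS ▸ Subgroup.mem_top g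
  simp only [SetLike.mem_coe]
  induction hg using Subgroup.closure_induction generalizing v with
  | mem s hs => exact hW s hs v
  | one => simp
  | mul g h _ _ ihg ihh => simpa using W.add_mem (ihg (ρ h v)) (ihh v)
  | inv g _ ih => simpa using W.neg_mem (ih (ρ g⁻¹ v))

/-- The twist of a representation by a character with values in `{±1}`. Since `χ = χ⁻¹`, its
invariants are the vectors on which `G` acts through `χ`. -/
def signTwist (χ : G →* ℤˣ) (ρ : Representation k G V) : Representation k G V where
  toFun g := (χ g : ℤ) • ρ g
  map_one' := by simp
  map_mul' g h := by simp only [map_mul, Units.val_mul, smul_mul_smul_comm]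

variable (χ : G →* ℤˣ) (ρ : Representation k G V)

theorem signTwist_apply (g : G) (v : V) : signTwist χ ρ g v = (χ g : ℤ) • ρ g v :=
  rfl

theorem signTwist_apply_of_eq_neg_one {s : G} (hs : χ s = -1) (v : V) :
    signTwist χ ρ s v = -ρ s v := by
  simp [signTwist_apply, hs]

theorem invariants_signTwist :
    (signTwist χ ρ).invariants = ⨅ g, LinearMap.ker (ρ g - (χ g : ℤ) • LinearMap.id) := by
  ext v
  simp only [mem_invariants, signTwist_apply, Submodule.mem_iInf, LinearMap.mem_ker,
    LinearMap.sub_apply, LinearMap.smul_apply, LinearMap.id_apply, sub_eq_zero]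
  refine forall_congr' fun g ↦ ?_
  rcases Int.units_eq_one_or (χ g) with h | h <;> simp [h, neg_eq_iff_eq_neg]

variable {χ ρ}

theorem isUnit_two_of_mul_self_eq_one [Fintype G] [Invertible (Fintype.card G : k)] {s : G}
    (hs : s * s = 1) (hs_ne : s ≠ 1) : IsUnit (2 : k) := by
  have two_dvd_card : 2 ∣ Fintype.card G :=
    orderOf_eq_prime ((pow_two s).trans hs) hs_ne ▸ orderOf_dvd_card
  exact isUnit_of_dvd_unit (mod_cast Nat.cast_dvd_cast two_dvd_card)
    (isUnit_of_invertible (Fintype.card G : k))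

theorem mem_coinvariantsKer_signTwist_of_fixed (h2 : IsUnit (2 : k)) {s : G} (hs : χ s = -1) {v : V}
    (hv : ρ s v = v) : v ∈ Coinvariants.ker (signTwist χ ρ) := by
  have sub_eq : signTwist χ ρ s v - v = (-2 : k) • v := by
    rw [signTwist_apply_of_eq_neg_one χ ρ hs, hv]
    module
  exact (Submodule.smul_mem_iff_of_isUnit _ h2.neg).1
    (sub_eq ▸ Coinvariants.sub_mem_ker s v)

theorem coinvariantsKer_signTwist_eq_span_fixed [Fintype G] [Invertible (Fintype.card G : k)]
    {S : Set G} (hS : Subgroup.closure S = ⊤) (hS_sq : ∀ s ∈ S, s * s = 1)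
    (hS_neg : ∀ s ∈ S, χ s = -1) :
    Coinvariants.ker (signTwist χ ρ) = Submodule.span k {v | ∃ s, s ∈ S ∧ ρ s v = v} := by
  apply le_antisymm
  · refine coinvariantsKer_le_of_closure_eq_top hS fun s hs v ↦ ?_
    have fixed : ρ s (ρ s v + v) = ρ s v + v := by
      rw [map_add, ← Module.End.mul_apply, ← map_mul, hS_sq s hs, map_one, Module.End.one_apply,
        add_comm]
    rw [signTwist_apply_of_eq_neg_one χ ρ (hS_neg s hs), ← neg_add', neg_mem_iff]
    exact Submodule.subset_span ⟨s, hs, fixed⟩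
  · refine Submodule.span_le.2 ?_
    rintro v ⟨s, hs, hv⟩
    have s_ne_one : s ≠ 1 := by
      rintro rfl
      simpa using (map_one χ).symm.trans (hS_neg 1 hs)
    exact mem_coinvariantsKer_signTwist_of_fixed
      (isUnit_two_of_mul_self_eq_one (hS_sq s hs) s_ne_one) (hS_neg s hs) hv

variable (χ ρ) in
theorem stmt11_general [Fintype G] [Invertible (Fintype.card G : k)] {S : Set G}
    (hS : Subgroup.closure S = ⊤) (hS_sq : ∀ s ∈ S, s * s = 1) (hS_neg : ∀ s ∈ S, χ s = -1) :
    IsCompl (Submodule.span k {v | ∃ s, s ∈ S ∧ ρ s v = v})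
      (⨅ g, LinearMap.ker (ρ g - (χ g : ℤ) • LinearMap.id)) := by
  rw [← coinvariantsKer_signTwist_eq_span_fixed hS hS_sq hS_neg, ← invariants_signTwist]
  exact (isCompl_invariants_coinvariantsKer _).symm

end Representation

theorem isSwap_mul_self {α : Type*} [DecidableEq α] {τ : Equiv.Perm α} (hτ : τ.IsSwap) :
    τ * τ = 1 := by
  obtain ⟨i, j, -, rfl⟩ := hτ
  exact Equiv.swap_mul_self i j

theorem permAct_one : permAct 1 = 1 :=
  AddMonoidAlgebra.domCongr_refl

theorem permAct_mul (σ τ : Equiv.Perm (Fin 3)) : permAct (σ * τ) = permAct σ * permAct τ :=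
  (AddMonoidAlgebra.trans_domCongr_domCongr (permAddEquiv τ) (permAddEquiv σ)).symm

/-- The action `permAct` of `S₃` on `R3` as a linear representation. -/
def permRep : Representation ℚ (Equiv.Perm (Fin 3)) R3 where
  toFun σ := (permAct σ).toLinearMap
  map_one' := by rw [permAct_one]; rfl
  map_mul' σ τ := by rw [permAct_mul]; rfl

theorem isCompl_Rs_Ra : IsCompl Rs Ra := by
  have : Invertible (Fintype.card (Equiv.Perm (Fin 3)) : ℚ) :=
    invertibleOfNonzero (mod_cast Fintype.card_ne_zero)
  exact stmt11_general Equiv.Perm.sign permRep Equiv.Perm.closure_isSwap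
    (fun _ ↦ isSwap_mul_self) (fun _ ↦ Equiv.Perm.IsSwap.sign_eq)

theorem stmt11 : Rs ⊓ Ra = ⊥ ∧ Rs ⊔ Ra = ⊤ :=
  ⟨isCompl_Rs_Ra.inf_eq_bot, isCompl_Rs_Ra.sup_eq_top⟩
end
end

section
/- Let 𝔄 = ℚ[t^{±1}]/(t⁴ + 1) ⊕ ℚ[t^{±1}]/(t² + 1). Then dim_ℚ ℋ(𝔄) = 2. -/
open LaurentPolynomial TensorProduct

set_option synthInstance.maxHeartbeats 1000000
set_option maxHeartbeats 1000000
noncomputable section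

/-- The wedge `a ∧ b ∧ c` as an element of the third exterior power. -/
def wedge3 (K : Type) [Field K] (M : Type) [AddCommGroup M] [Module K M] (a b c : M) :
    ⋀[K]^3 M :=
  ⟨ExteriorAlgebra.ιMulti K 3 ![a, b, c],
    ExteriorAlgebra.ιMulti_range K 3 (Set.mem_range_self _)⟩

/-- The holonomy subspace of the third exterior power: the `K`-span of the elements
`β₁ ∧ β₂ ∧ β₃ - tβ₁ ∧ tβ₂ ∧ tβ₃`. -/
def wedgeHol (K : Type) [Field K] (M : Type) [AddCommGroup M]
    [Module (LaurentPolynomial K) M] [Module K M]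
    [IsScalarTower K (LaurentPolynomial K) M] :
    Submodule K ↥(⋀[K]^3 M) :=
  Submodule.span K { x | ∃ a b c : M,
    x = wedge3 K M a b c -
      wedge3 K M ((T 1 : LaurentPolynomial K) • a) ((T 1 : LaurentPolynomial K) • b)
        ((T 1 : LaurentPolynomial K) • c) }

/-- `ℋ(M)`: the quotient of the third exterior power by the holonomy subspace. -/
abbrev Hcal (K : Type) [Field K] (M : Type) [AddCommGroup M]
    [Module (LaurentPolynomial K) M] [Module K M]
    [IsScalarTower K (LaurentPolynomial K) M] : Type :=
  ↥(⋀[K]^3 M) ⧸ wedgeHol K M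

/-- The module `𝔄 = ℚ[t^{±1}]/(t⁴+1) ⊕ ℚ[t^{±1}]/(t²+1)`. -/
abbrev Amod : Type := LQuot ℚ (T 4 + 1) × LQuot ℚ (T 2 + 1)

/-!
Let `K` be a field with `2 ≠ 0`, `E = K[t^{±1}]/(t⁴ + 1)` and `F = K[t^{±1}]/(t² + 1)`. The operator
`t⁴` is `-1` on `E` and `1` on `F`, and `t²` is `-1` on `F`; hence the classes of `E ∧ E ∧ E`,
`E ∧ F ∧ F` and `F ∧ F ∧ F` equal their own negatives and vanish. Shifting by powers of `t`, the
classes of `E ∧ E ∧ F` are all spanned by those of `tⁱ ∧ tʲ ∧ 1`, which the rules `t⁴ = -1` on `E`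
and `t² = -1` on `F` reduce to multiples of `1 ∧ t ∧ 1` and `t ∧ t² ∧ 1`.

These two are independent: let `ζ` be the root of `X⁴ + 1` in `K[X]/(X⁴ + 1)`. The functionals
`t ↦ ζ` and `t ↦ -ζ` on `E` and `t ↦ ζ²` on `F` are eigenvectors of `t` whose eigenvalues have
product `ζ · (-ζ) · ζ² = 1`, so their `3 × 3` determinant is a linear map on `ℋ`. It takes the
values `-2ζ` and `2ζ³` on the two classes.
-/

theorem eq_zero_of_eq_neg_self (K : Type*) {N : Type*} [Field K] [NeZero (2 : K)] [AddCommGroup N]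
    [Module K N] {x : N} (hx : x = -x) : x = 0 := by
  have two_smul_eq_zero : (2 : K) • x = 0 := by rw [two_smul, ← eq_neg_iff_add_eq_zero, ← hx]
  exact (smul_eq_zero.mp two_smul_eq_zero).resolve_left two_ne_zero

theorem neg_one_ne_one_of_two_ne_zero {K : Type*} [Field K] [NeZero (2 : K)] : (-1 : K) ≠ 1 :=
  fun h => one_ne_zero (eq_zero_of_eq_neg_self K h.symm)

theorem mem_of_antiperiodic {N : Type*} [AddCommGroup N] {S : AddSubgroup N} {f : ℤ → N} {d : ℤ}
    (hd : 0 < d) (hf : Function.Antiperiodic f d) (hS : ∀ n, 0 ≤ n → n < d → f n ∈ S) (n : ℤ) :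
    f n ∈ S := by
  have hn : f n = ((n / d).negOnePow : ℤ) • f (n % d) := by
    rw [← hf.add_zsmul_eq, smul_eq_mul, Int.emod_add_ediv_mul]
  rw [hn]
  exact S.zsmul_mem (hS _ (Int.emod_nonneg n hd.ne') (Int.emod_lt_of_pos n hd)) _

theorem mem_span_pair_of_antiperiodic {K N : Type*} [Field K] [NeZero (2 : K)] [AddCommGroup N]
    [Module K N] {g : ℤ → ℤ → N} (hswap : ∀ i j, g i j = -g j i)
    (hright : ∀ i, Function.Antiperiodic (g i) 4) (hdiag : ∀ i j, g (i + 2) (j + 2) = -g i j)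
    (i j : ℤ) : g i j ∈ Submodule.span K {g 0 1, g 1 2} := by
  set S := Submodule.span K {g 0 1, g 1 2}
  have gap_zero (i) : g i i = 0 := eq_zero_of_eq_neg_self K (hswap i i)
  have gap_one (i) : g i (i + 1) ∈ S := by
    refine mem_of_antiperiodic (S := S.toAddSubgroup) (f := fun i => g i (i + 1)) two_pos
      (fun i => ?_) (fun n hn hn' => ?_) i
    · rw [← hdiag, add_right_comm]
    · interval_cases n <;> exact Submodule.subset_span (by simp)
  have gap_two (i) : g i (i + 2) = 0 := by
    apply eq_zero_of_eq_neg_self K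
    calc g i (i + 2) = -g (i + 2) i := hswap _ _
      _ = g (i + 2) (i + 2 + 2) := by rw [← hright, add_assoc]; norm_num
      _ = -g i (i + 2) := hdiag _ _
  have gap_three (i) : g i (i + 3) = g (i + 3) (i + 3 + 1) := by
    rw [hswap, ← hright, add_assoc i 3 1]; norm_num
  have gap_any (d) : g i (i + d) ∈ S := by
    refine mem_of_antiperiodic (S := S.toAddSubgroup) (f := fun d => g i (i + d)) four_pos
      (fun d => ?_) (fun n hn hn' => ?_) d
    · rw [← hright, add_assoc]
    · interval_cases n
      · simp [gap_zero]
      · exact gap_one i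
      · simp [gap_two]
      · exact gap_three i ▸ gap_one (i + 3)
  simpa using gap_any (j - i)

section DetForm

variable {ι K M R : Type*} [Fintype ι] [DecidableEq ι] [CommSemiring K] [AddCommMonoid M]
  [Module K M] [CommRing R] [Algebra K R]

/-- The alternating form `v ↦ det (χ j (v i))` attached to a family of `R`-valued functionals,
written as an alternatization so that it is linear over `K` rather than over `R`. -/
def detForm (χ : ι → M →ₗ[K] R) : M [⋀^ι]→ₗ[K] R :=
  MultilinearMap.alternatization ((MultilinearMap.mkPiAlgebra K ι R).compLinearMap χ)

theorem detForm_apply (χ : ι → M →ₗ[K] R) (v : ι → M) :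
    detForm χ v = (Matrix.of fun i j => χ j (v i)).det := by
  rw [detForm, MultilinearMap.alternatization_apply, Matrix.det_apply]
  rfl

theorem detForm_eq_prod_mul {χ : ι → M →ₗ[K] R} {μ : ι → R} {v w : ι → M}
    (hw : ∀ i j, χ j (w i) = μ j * χ j (v i)) : detForm χ w = (∏ j, μ j) * detForm χ v := by
  simp only [detForm_apply, hw]
  exact Matrix.det_mul_row μ (Matrix.of fun i j => χ j (v i))

end DetForm

namespace LQuot

variable {K : Type} [Field K]

/-- The class of `tⁿ` in `K[t^{±1}]/(p)`. -/
def tpow (p : K[T;T⁻¹]) (n : ℤ) : LQuot K p := Ideal.Quotient.mk _ (T n)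

theorem T_smul_tpow (p : K[T;T⁻¹]) (m n : ℤ) :
    (T m : K[T;T⁻¹]) • tpow p n = tpow p (n + m) := by
  rw [add_comm, tpow, tpow, T_add]
  rfl

theorem span_range_tpow (p : K[T;T⁻¹]) : Submodule.span K (Set.range (tpow p)) = ⊤ := by
  refine eq_top_iff.mpr fun x _ => ?_
  obtain ⟨q, rfl⟩ := Ideal.Quotient.mk_surjective x
  induction q using LaurentPolynomial.induction_on' with
  | add q r hq hr => rw [map_add]; exact add_mem (hq trivial) (hr trivial)
  | C_mul_T n a =>
    have htpow : tpow p n ∈ Submodule.span K (Set.range (tpow p)) := Submodule.subset_span ⟨n, rfl⟩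
    rw [← smul_eq_C_mul]
    exact Submodule.smul_mem _ a htpow

theorem T_smul_eq_neg (d : ℤ) (x : LQuot K (T d + 1)) : (T d : K[T;T⁻¹]) • x = -x := by
  obtain ⟨q, rfl⟩ := Ideal.Quotient.mk_surjective x
  refine eq_neg_of_add_eq_zero_left (Ideal.Quotient.eq_zero_iff_mem.mpr ?_)
  exact Ideal.mem_span_singleton'.mpr ⟨q, by simp only [smul_eq_mul]; ring⟩

theorem tpow_antiperiodic (d : ℤ) : Function.Antiperiodic (tpow (T d + 1 : K[T;T⁻¹])) d :=
  fun n => by rw [← T_smul_tpow, T_smul_eq_neg]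

variable {R : Type*} [CommRing R] [Algebra K R] {p : K[T;T⁻¹]}

/-- Evaluation `t ↦ u` on `K[t^{±1}]/(p)`, at a unit `u` of a `K`-algebra with `p(u) = 0`. -/
def eval (u : Rˣ) (hu : eval₂ (algebraMap K R) u p = 0) : LQuot K p →ₐ[K] R :=
  Ideal.Quotient.liftₐ (Ideal.span {p})
    { eval₂ (algebraMap K R) u with commutes' := fun r => eval₂_C (algebraMap K R) u r }
    fun q hq => by
      obtain ⟨r, rfl⟩ := Ideal.mem_span_singleton'.mp hq
      exact (map_mul (eval₂ (algebraMap K R) u) r p).trans (by rw [hu, mul_zero])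

theorem eval₂_T_add_one {u : Rˣ} {d : ℤ} (hu : u ^ d = -1) :
    eval₂ (algebraMap K R) u (T d + 1) = 0 := by
  rw [map_add, map_one, eval₂_T, hu, Units.val_neg, Units.val_one, neg_add_cancel]

theorem eval_tpow (u : Rˣ) (hu : eval₂ (algebraMap K R) u p = 0) (n : ℤ) :
    eval u hu (tpow p n) = (u ^ n : Rˣ) :=
  eval₂_T (algebraMap K R) u n

theorem eval_T_smul (u : Rˣ) (hu : eval₂ (algebraMap K R) u p = 0) (n : ℤ) (x : LQuot K p) :
    eval u hu ((T n : K[T;T⁻¹]) • x) = (u ^ n : Rˣ) * eval u hu x := by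
  rw [← eval_tpow u hu n, ← map_mul]
  rfl

end LQuot

namespace Hcal

variable {K M : Type} [Field K] [AddCommGroup M] [Module K[T;T⁻¹] M] [Module K M]
  [IsScalarTower K K[T;T⁻¹] M]

variable (K M) in
/-- The class in `ℋ(M)` of `v 0 ∧ v 1 ∧ v 2`, as an alternating map of `v`. -/
def mk : M [⋀^Fin 3]→ₗ[K] Hcal K M :=
  (wedgeHol K M).mkQ.compAlternatingMap (exteriorPower.ιMulti K 3)

theorem mk_swap_left (a b c : M) : mk K M ![a, b, c] = -mk K M ![b, a, c] := by
  rw [← (mk K M).map_swap ![b, a, c] (show (0 : Fin 3) ≠ 1 by decide)]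
  congr 1
  ext i
  fin_cases i <;> rfl

theorem mk_neg_middle (a b c : M) : mk K M ![a, -b, c] = -mk K M ![a, b, c] := by
  have hupdate (x : M) : Function.update ![a, b, c] 1 x = ![a, x, c] := by
    ext i
    fin_cases i <;> rfl
  rw [← hupdate, AlternatingMap.map_update_neg, hupdate]

theorem mk_neg_right (a b c : M) : mk K M ![a, b, -c] = -mk K M ![a, b, c] := by
  have hupdate (x : M) : Function.update ![a, b, c] 2 x = ![a, b, x] := by
    ext i
    fin_cases i <;> rfl
  rw [← hupdate, AlternatingMap.map_update_neg, hupdate]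

theorem mk_T_one_smul (v : Fin 3 → M) : mk K M ((T 1 : K[T;T⁻¹]) • v) = mk K M v := by
  obtain ⟨a, b, c, rfl⟩ : ∃ a b c, v = ![a, b, c] :=
    ⟨v 0, v 1, v 2, (FinVec.etaExpand_eq v).symm⟩
  have hmem : wedge3 K M a b c - wedge3 K M ((T 1 : K[T;T⁻¹]) • a) ((T 1 : K[T;T⁻¹]) • b)
      ((T 1 : K[T;T⁻¹]) • c) ∈ wedgeHol K M := Submodule.subset_span ⟨a, b, c, rfl⟩
  simp only [Matrix.smul_cons, Matrix.smul_empty]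
  exact ((Submodule.Quotient.eq _).mpr hmem).symm

theorem mk_T_smul (n : ℤ) (v : Fin 3 → M) : mk K M ((T n : K[T;T⁻¹]) • v) = mk K M v := by
  induction n using Int.induction_on with
  | zero => rw [T_zero, one_smul]
  | succ n ih => rw [add_comm, T_add, mul_smul, mk_T_one_smul, ih]
  | pred n ih =>
    rw [← ih, ← mk_T_one_smul, ← mul_smul, ← T_add, add_sub_cancel]

theorem mk_eq_zero_of_T_smul_eq {n : ℤ} {v : Fin 3 → M} {μ : Fin 3 → K}
    (hv : ∀ i, (T n : K[T;T⁻¹]) • v i = μ i • v i) (hμ : ∏ i, μ i ≠ 1) : mk K M v = 0 := by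
  have hmk : (∏ i, μ i) • mk K M v = mk K M v := by
    rw [← AlternatingMap.map_smul_univ, ← mk_T_smul n v]
    exact congrArg (mk K M) (funext fun i => (hv i).symm)
  by_contra hne
  exact hμ (smul_left_injective K hne (hmk.trans (one_smul K _).symm))

theorem eq_top_of_mk_mem {I : Type*} [LinearOrder I] {v : I → M}
    (hv : Submodule.span K (Set.range v) = ⊤) {S : Submodule K (Hcal K M)}
    (hS : ∀ i j k, i < j → j < k → mk K M ![v i, v j, v k] ∈ S) : S = ⊤ := by
  have hcomap : S.comap (wedgeHol K M).mkQ = ⊤ := by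
    rw [eq_top_iff, ← exteriorPower.ιMulti_family_span_of_span K hv, Submodule.span_le]
    rintro _ ⟨s, rfl⟩
    let α := Set.powersetCard.ofFinEmbEquiv.symm s
    have hα : mk K M (v ∘ α) ∈ S := by
      rw [← FinVec.etaExpand_eq (v ∘ α)]
      exact hS _ _ _ (α.strictMono (by decide)) (α.strictMono (by decide))
    exact hα
  rw [← Submodule.map_comap_eq_of_surjective (Submodule.mkQ_surjective _) S, hcomap,
    Submodule.map_top, Submodule.range_mkQ]

/-- The universal property of `ℋ(M)`: a `t`-invariant alternating form on `M` is a linear map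
on `ℋ(M)`. -/
def lift {N : Type*} [AddCommGroup N] [Module K N] (φ : M [⋀^Fin 3]→ₗ[K] N)
    (hφ : ∀ v, φ ((T 1 : K[T;T⁻¹]) • v) = φ v) : Hcal K M →ₗ[K] N :=
  (wedgeHol K M).liftQ (exteriorPower.alternatingMapLinearEquiv φ) <| by
    refine Submodule.span_le.mpr ?_
    rintro _ ⟨a, b, c, rfl⟩
    have hwedge (a b c : M) :
        exteriorPower.alternatingMapLinearEquiv φ (wedge3 K M a b c) = φ ![a, b, c] :=
      exteriorPower.alternatingMapLinearEquiv_apply_ιMulti φ _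
    rw [SetLike.mem_coe, LinearMap.mem_ker, map_sub, hwedge, hwedge, sub_eq_zero, ← hφ]
    simp only [Matrix.smul_cons, Matrix.smul_empty]

theorem lift_mk {N : Type*} [AddCommGroup N] [Module K N] (φ : M [⋀^Fin 3]→ₗ[K] N)
    (hφ : ∀ v, φ ((T 1 : K[T;T⁻¹]) • v) = φ v) (v : Fin 3 → M) : lift φ hφ (mk K M v) = φ v :=
  exteriorPower.alternatingMapLinearEquiv_apply_ιMulti φ v

end Hcal

/-- `K[t^{±1}]/(t⁴ + 1) ⊕ K[t^{±1}]/(t² + 1)`, the module `𝔄` over an arbitrary field. -/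
abbrev AmodOver (K : Type) [Field K] : Type := LQuot K (T 4 + 1) × LQuot K (T 2 + 1)

namespace AmodOver

variable {K : Type} [Field K]

variable (K) in
/-- `tⁿ` in the first summand. -/
def e (n : ℤ) : AmodOver K := (LQuot.tpow _ n, 0)

variable (K) in
/-- `tⁿ` in the second summand. -/
def f (n : ℤ) : AmodOver K := (0, LQuot.tpow _ n)

variable (K) in
/-- The generators `e n` and `f n` in one family, with every `e` before every `f`. -/
def generator (i : ℤ ⊕ₗ ℤ) : AmodOver K := Sum.elim (e K) (f K) (ofLex i)

theorem span_range_generator : Submodule.span K (Set.range (generator K)) = ⊤ := by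
  have hrange : Set.range (generator K) =
      LinearMap.inl K (LQuot K (T 4 + 1)) (LQuot K (T 2 + 1)) '' Set.range (LQuot.tpow _) ∪
        LinearMap.inr K (LQuot K (T 4 + 1)) (LQuot K (T 2 + 1)) '' Set.range (LQuot.tpow _) := by
    rw [← Set.range_comp, ← Set.range_comp, ← Set.Sum.elim_range]
    exact ofLex.surjective.range_comp _
  rw [hrange, LinearMap.span_inl_union_inr, LQuot.span_range_tpow, LQuot.span_range_tpow,
    Submodule.prod_top]

theorem T_smul_e (m n : ℤ) : (T m : K[T;T⁻¹]) • e K n = e K (n + m) := by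
  simp [e, LQuot.T_smul_tpow]

theorem T_smul_f (m n : ℤ) : (T m : K[T;T⁻¹]) • f K n = f K (n + m) := by
  simp [f, LQuot.T_smul_tpow]

theorem e_antiperiodic : Function.Antiperiodic (e K) 4 :=
  fun n => by simp [e, LQuot.tpow_antiperiodic 4 n]

theorem f_antiperiodic : Function.Antiperiodic (f K) 2 :=
  fun n => by simp [f, LQuot.tpow_antiperiodic 2 n]

theorem T_four_smul_e (n : ℤ) : (T 4 : K[T;T⁻¹]) • e K n = (-1 : K) • e K n := by
  rw [T_smul_e, e_antiperiodic, neg_one_smul]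

theorem T_two_smul_f (n : ℤ) : (T 2 : K[T;T⁻¹]) • f K n = (-1 : K) • f K n := by
  rw [T_smul_f, f_antiperiodic, neg_one_smul]

theorem T_four_smul_f (n : ℤ) : (T 4 : K[T;T⁻¹]) • f K n = (1 : K) • f K n := by
  rw [T_smul_f, one_smul]
  exact f_antiperiodic.periodic_two_mul n

theorem mk_e_e_f_shift (i j k m : ℤ) :
    Hcal.mk K (AmodOver K) ![e K (i + m), e K (j + m), f K (k + m)] =
      Hcal.mk K (AmodOver K) ![e K i, e K j, f K k] := by
  rw [← Hcal.mk_T_smul m ![e K i, e K j, f K k]]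
  simp only [Matrix.smul_cons, Matrix.smul_empty, T_smul_e, T_smul_f]

variable (K) in
/-- The classes of `1 ∧ t ∧ 1` and `t ∧ t² ∧ 1`, which form a basis of `ℋ(𝔄)`. -/
def basisClass : Fin 2 → Hcal K (AmodOver K) :=
  ![Hcal.mk K (AmodOver K) ![e K 0, e K 1, f K 0],
    Hcal.mk K (AmodOver K) ![e K 1, e K 2, f K 0]]

section UpperBound

variable [NeZero (2 : K)]

theorem mk_e_e_e (i j k : ℤ) : Hcal.mk K (AmodOver K) ![e K i, e K j, e K k] = 0 := by
  refine Hcal.mk_eq_zero_of_T_smul_eq (n := 4) (μ := ![-1, -1, -1]) ?_ ?_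
  · simp [Fin.forall_fin_succ, T_four_smul_e]
  · simpa [Fin.prod_univ_three] using neg_one_ne_one_of_two_ne_zero

theorem mk_e_f_f (i j k : ℤ) : Hcal.mk K (AmodOver K) ![e K i, f K j, f K k] = 0 := by
  refine Hcal.mk_eq_zero_of_T_smul_eq (n := 4) (μ := ![-1, 1, 1]) ?_ ?_
  · simp [Fin.forall_fin_succ, T_four_smul_e, T_four_smul_f]
  · simpa [Fin.prod_univ_three] using neg_one_ne_one_of_two_ne_zero

theorem mk_f_f_f (i j k : ℤ) : Hcal.mk K (AmodOver K) ![f K i, f K j, f K k] = 0 := by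
  refine Hcal.mk_eq_zero_of_T_smul_eq (n := 2) (μ := ![-1, -1, -1]) ?_ ?_
  · simp [Fin.forall_fin_succ, T_two_smul_f]
  · simpa [Fin.prod_univ_three] using neg_one_ne_one_of_two_ne_zero

theorem mk_e_e_f_zero_mem_span (i j : ℤ) :
    Hcal.mk K (AmodOver K) ![e K i, e K j, f K 0] ∈
      Submodule.span K (Set.range (basisClass K)) := by
  rw [basisClass, Matrix.range_cons_cons_empty]
  refine mem_span_pair_of_antiperiodic
    (g := fun i j => Hcal.mk K (AmodOver K) ![e K i, e K j, f K 0])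
    (fun i j => Hcal.mk_swap_left _ _ _) (fun i j => ?_) (fun i j => ?_) i j
  · simp only [e_antiperiodic j, Hcal.mk_neg_middle]
  · rw [← mk_e_e_f_shift i j 0 2, f_antiperiodic, Hcal.mk_neg_right, neg_neg]

theorem mk_e_e_f_mem_span (i j k : ℤ) :
    Hcal.mk K (AmodOver K) ![e K i, e K j, f K k] ∈
      Submodule.span K (Set.range (basisClass K)) := by
  rw [← mk_e_e_f_shift i j k (-k), add_neg_cancel]
  exact mk_e_e_f_zero_mem_span _ _

theorem span_range_basisClass : Submodule.span K (Set.range (basisClass K)) = ⊤ := by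
  refine Hcal.eq_top_of_mk_mem span_range_generator fun i j k hij hjk => ?_
  match i, j, k, hij, hjk with
  | .inlₗ i, .inlₗ j, .inlₗ k, _, _ => exact mk_e_e_e (K := K) i j k ▸ zero_mem _
  | .inlₗ i, .inlₗ j, .inrₗ k, _, _ => exact mk_e_e_f_mem_span i j k
  | .inlₗ i, .inrₗ j, .inrₗ k, _, _ => exact mk_e_f_f (K := K) i j k ▸ zero_mem _
  | .inrₗ i, .inrₗ j, .inrₗ k, _, _ => exact mk_f_f_f (K := K) i j k ▸ zero_mem _
  | .inrₗ _, .inlₗ _, _, hij, _ => exact absurd hij Sum.Lex.not_inr_lt_inl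
  | _, .inrₗ _, .inlₗ _, _, hjk => exact absurd hjk Sum.Lex.not_inr_lt_inl

end UpperBound

section LowerBound

variable {R : Type*} [CommRing R] [Algebra K R] {u : Rˣ}

/-- The functionals `t ↦ u` and `t ↦ -u` on the first summand and `t ↦ u²` on the second, for a
unit `u` with `u⁴ = -1`. -/
def evalTriple (hu : u ^ 4 = -1) : Fin 3 → AmodOver K →ₗ[K] R :=
  ![(LQuot.eval u (LQuot.eval₂_T_add_one (mod_cast hu))).toLinearMap ∘ₗ LinearMap.fst K _ _,
    (LQuot.eval (-u) (LQuot.eval₂_T_add_one (by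
      rw [zpow_ofNat, Even.neg_pow (by decide), hu]))).toLinearMap ∘ₗ LinearMap.fst K _ _,
    (LQuot.eval (u ^ 2) (LQuot.eval₂_T_add_one (by
      rw [zpow_ofNat, ← pow_mul, hu]))).toLinearMap ∘ₗ LinearMap.snd K _ _]

theorem evalTriple_e (hu : u ^ 4 = -1) (n : ℤ) (i : Fin 3) :
    evalTriple (K := K) hu i (e K n) = ![((u ^ n : Rˣ) : R), ((-u) ^ n : Rˣ), 0] i := by
  fin_cases i <;> simp [evalTriple, e, LQuot.eval_tpow]

theorem evalTriple_f (hu : u ^ 4 = -1) (n : ℤ) (i : Fin 3) :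
    evalTriple (K := K) hu i (f K n) = ![0, 0, (((u ^ 2) ^ n : Rˣ) : R)] i := by
  fin_cases i <;> simp [evalTriple, f, LQuot.eval_tpow]

theorem evalTriple_T_one_smul (hu : u ^ 4 = -1) (i : Fin 3) (x : AmodOver K) :
    evalTriple hu i ((T 1 : K[T;T⁻¹]) • x) = ![(u : R), -u, u ^ 2] i * evalTriple hu i x := by
  fin_cases i <;> simp [evalTriple, LQuot.eval_T_smul]

theorem detForm_evalTriple_T_one_smul (hu : u ^ 4 = -1) (v : Fin 3 → AmodOver K) :
    detForm (evalTriple hu) ((T 1 : K[T;T⁻¹]) • v) = detForm (evalTriple hu) v := by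
  have hprod : ∏ i, ![(u : R), -u, u ^ 2] i = 1 := by
    have hu' : (u : R) ^ 4 = -1 := by simpa using congrArg Units.val hu
    simp only [Fin.prod_univ_three, Matrix.cons_val]
    linear_combination -hu'
  rw [detForm_eq_prod_mul (w := (T 1 : K[T;T⁻¹]) • v) (v := v)
    fun i j => evalTriple_T_one_smul hu j (v i), hprod, one_mul]

theorem detForm_evalTriple_e_e_f (hu : u ^ 4 = -1) (i j k : ℤ) :
    detForm (evalTriple (K := K) hu) ![e K i, e K j, f K k] =
      ((u ^ i * (-u) ^ j : Rˣ) - ((-u) ^ i * u ^ j : Rˣ)) * ((u ^ 2) ^ k : Rˣ) := by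
  rw [detForm_apply, Matrix.det_fin_three]
  simp only [Matrix.of_apply, Matrix.cons_val, evalTriple_e, evalTriple_f, Units.val_mul]
  ring

theorem lift_detForm_evalTriple_basisClass (hu : u ^ 4 = -1) :
    Hcal.lift (detForm (evalTriple hu)) (detForm_evalTriple_T_one_smul hu) ∘ basisClass K =
      ![-2 * (u : R), 2 * (u : R) ^ 3] := by
  have hzero : detForm (evalTriple hu) ![e K 0, e K 1, f K 0] = -2 * (u : R) := by
    simp only [detForm_evalTriple_e_e_f, zpow_zero, zpow_one, one_mul, Units.val_neg, Units.val_one]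
    ring
  have hone : detForm (evalTriple hu) ![e K 1, e K 2, f K 0] = 2 * (u : R) ^ 3 := by
    simp only [detForm_evalTriple_e_e_f, zpow_ofNat, Units.val_mul, Units.val_pow_eq_pow_val,
      Units.val_neg]
    ring
  ext i
  fin_cases i
  · exact (Hcal.lift_mk _ _ _).trans hzero
  · exact (Hcal.lift_mk _ _ _).trans hone

open Polynomial in
theorem root_X_pow_four_add_one_pow_four : AdjoinRoot.root (X ^ 4 + 1 : K[X]) ^ 4 = -1 := by
  have hroot := AdjoinRoot.eval₂_root (X ^ 4 + 1 : K[X])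
  rw [eval₂_add, eval₂_X_pow, eval₂_one] at hroot
  exact eq_neg_of_add_eq_zero_left hroot

open Polynomial in
theorem linearIndependent_root_X_pow_four_add_one :
    LinearIndependent K
      ![AdjoinRoot.root (X ^ 4 + 1 : K[X]), AdjoinRoot.root (X ^ 4 + 1 : K[X]) ^ 3] := by
  have hmonic : (X ^ 4 + 1 : K[X]).Monic := monic_X_pow_add_C 1 four_ne_zero
  have hdeg : 4 = (X ^ 4 + 1 : K[X]).natDegree := (natDegree_X_pow_add_C (r := (1 : K))).symm
  have hcomp : ![AdjoinRoot.root (X ^ 4 + 1 : K[X]), AdjoinRoot.root (X ^ 4 + 1 : K[X]) ^ 3] =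
      (AdjoinRoot.powerBasis' hmonic).basis ∘ Fin.cast hdeg ∘ ![1, 3] := by
    rw [PowerBasis.coe_basis, AdjoinRoot.powerBasis'_gen]
    ext i
    fin_cases i
    · exact (pow_one _).symm
    · rfl
  rw [hcomp]
  exact (AdjoinRoot.powerBasis' hmonic).basis.linearIndependent.comp _
    ((Fin.cast_injective hdeg).comp (by decide))

theorem linearIndependent_basisClass [NeZero (2 : K)] : LinearIndependent K (basisClass K) := by
  let ζ := AdjoinRoot.root (.X ^ 4 + 1 : Polynomial K)
  have hζ : ζ ^ 4 = -1 := root_X_pow_four_add_one_pow_four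
  let u : (AdjoinRoot (.X ^ 4 + 1 : Polynomial K))ˣ :=
    .mkOfMulEqOne ζ (-ζ ^ 3) (by linear_combination -hζ)
  have hu : u ^ 4 = -1 := Units.ext hζ
  refine LinearIndependent.of_comp
    (Hcal.lift (detForm (evalTriple hu)) (detForm_evalTriple_T_one_smul hu)) ?_
  rw [lift_detForm_evalTriple_basisClass, LinearIndependent.pair_iff]
  intro a b hab
  have hcoeff := LinearIndependent.pair_iff.mp linearIndependent_root_X_pow_four_add_one
    (-2 * a) (2 * b) (by
      rw [← hab]
      simp only [Algebra.smul_def, map_mul, map_neg, map_ofNat]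
      change _ = _ * (-2 * ζ) + _ * (2 * ζ ^ 3)
      ring)
  simpa [two_ne_zero] using hcoeff

end LowerBound

end AmodOver

theorem stmt15_general (K : Type) [Field K] [NeZero (2 : K)] :
    Module.finrank K (Hcal K (LQuot K (T 4 + 1) × LQuot K (T 2 + 1))) = 2 := by
  let basis := Module.Basis.mk (AmodOver.linearIndependent_basisClass (K := K))
    AmodOver.span_range_basisClass.ge
  rw [Module.finrank_eq_card_basis basis, Fintype.card_fin]

theorem stmt15 : Module.finrank ℚ (Hcal ℚ Amod) = 2 :=
  stmt15_general ℚ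
end
end

section
/- Let z ∈ ℂ be a primitive cube root of unity (z³ = 1, z ≠ 1). For an integer m ≥ 1 set A_m = ℂ[t^{±1}]/((t − z)^m) and V_m = (A_m ⊗_ℂ A_m ⊗_ℂ A_m)/H. Then dim_ℂ V_m = 3 if m = 2, dim_ℂ V_m = 7 if m = 3, and dim_ℂ V_m = 12 if m = 4. -/
open LaurentPolynomial TensorProduct

set_option synthInstance.maxHeartbeats 1000000
set_option maxHeartbeats 1000000
noncomputable section

/-- `V_m`: the quotient of `A_m ⊗ A_m ⊗ A_m` by the holonomy subspace, for
`A_m = ℂ[t^{±1}]/((t-z)^m)`. -/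
abbrev Vq (z : ℂ) (m : ℕ) : Type :=
  Trip ℂ ((T 1 - C z) ^ m) ((T 1 - C z) ^ m) ((T 1 - C z) ^ m) ⧸
    holSub ℂ ((T 1 - C z) ^ m) ((T 1 - C z) ^ m) ((T 1 - C z) ^ m)

/-!
Write `t = z * exp n` in `A_m` with `n` nilpotent. As `z ^ 3 = 1`, the element `t ⊗ t ⊗ t` is
`exp N` with `N = n ⊗ 1 ⊗ 1 + 1 ⊗ n ⊗ 1 + 1 ⊗ 1 ⊗ n`, and `exp N - 1` is a unit multiple of `N`;
hence `V_m` is the cokernel of multiplication by `N`. The powers of `n` can be rescaled so that `n`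
becomes the raising operator of the irreducible unitary representation of `𝔰𝔩₂` of dimension `m`.
Then `N` is the raising operator of its tensor cube, and `V_m` has one dimension for each
irreducible constituent. Each constituent has exactly one weight in `{0, 1}`, so the dimension
counts the `(i, j, k)` with `0 ≤ i, j, k < m` whose weight `2 * (i + j + k) + 3 - 3 * m` is `0`
or `1`.
-/

section RaisingMatrix

open Matrix
open scoped Kronecker ComplexOrder

theorem rank_eq_rank_mul_add_rank_mul {ι K : Type*} [Fintype ι] [DecidableEq ι] [Field K]
    {A P Q : Matrix ι ι K} (hP : P * P = P) (hPQ : P * A = A * Q) :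
    A.rank = (P * A).rank + ((1 - P) * A).rank := by
  have hQ : (1 - P) * A = A * (1 - Q) := by rw [sub_mul, mul_sub, hPQ, one_mul, mul_one]
  have hsup : (P * A).mulVecLin.range ⊔ ((1 - P) * A).mulVecLin.range = A.mulVecLin.range := by
    apply le_antisymm
    · rw [hQ, hPQ, mulVecLin_mul, mulVecLin_mul]
      exact sup_le (LinearMap.range_comp_le_range _ _) (LinearMap.range_comp_le_range _ _)
    · rintro _ ⟨v, rfl⟩
      refine Submodule.mem_sup.2 ⟨_, ⟨v, rfl⟩, _, ⟨v, rfl⟩, ?_⟩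
      simp only [mulVecLin_apply]
      rw [← add_mulVec, ← add_mul, add_sub_cancel, one_mul]
  have hinf : (P * A).mulVecLin.range ⊓ ((1 - P) * A).mulVecLin.range = ⊥ := by
    rw [Submodule.eq_bot_iff]
    rintro _ ⟨⟨v, rfl⟩, w, hw⟩
    simp only [mulVecLin_apply] at hw ⊢
    calc (P * A) *ᵥ v = P *ᵥ (P * A) *ᵥ v := by rw [mulVec_mulVec, ← mul_assoc, hP]
      _ = (P * (1 - P) * A) *ᵥ w := by rw [← hw, mulVec_mulVec, mul_assoc]
      _ = 0 := by rw [mul_sub, mul_one, hP, sub_self, zero_mul, zero_mulVec]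
  have h := Submodule.finrank_sup_add_finrank_inf_eq
    (P * A).mulVecLin.range ((1 - P) * A).mulVecLin.range
  rwa [hsup, hinf, finrank_bot, add_zero] at h

variable {𝕜 ι κ : Type*} [RCLike 𝕜] [Fintype ι] [DecidableEq ι] [Fintype κ] [DecidableEq κ]

/-- `E` is the matrix, in an orthonormal basis of weight vectors of weights `wt`, of the raising
operator of a unitary representation of `𝔰𝔩₂`: the lowering operator is the adjoint `Eᴴ`, and
`[E, Eᴴ]` is the weight operator. -/
structure IsRaisingMatrix (E : Matrix ι ι 𝕜) (wt : ι → ℤ) : Prop where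
  weight_eq : ∀ i j, E i j ≠ 0 → wt i = wt j + 2
  commutator_eq : E * Eᴴ - Eᴴ * E = diagonal fun i => (wt i : 𝕜)

namespace IsRaisingMatrix

variable {E : Matrix ι ι 𝕜} {wt : ι → ℤ} {E' : Matrix κ κ 𝕜} {wt' : κ → ℤ}

theorem conjTranspose (h : IsRaisingMatrix E wt) : IsRaisingMatrix Eᴴ (-wt) where
  weight_eq i j hij := by
    have := h.weight_eq j i (by simpa using hij)
    simp only [Pi.neg_apply]
    omega
  commutator_eq := by
    rw [conjTranspose_conjTranspose, ← neg_sub, h.commutator_eq, diagonal_neg]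
    simp

theorem kroneckerSum (h : IsRaisingMatrix E wt) (h' : IsRaisingMatrix E' wt') :
    IsRaisingMatrix (E ⊗ₖ (1 : Matrix κ κ 𝕜) + (1 : Matrix ι ι 𝕜) ⊗ₖ E')
      (fun i => wt i.1 + wt' i.2) where
  weight_eq := by
    rintro ⟨i, k⟩ ⟨j, l⟩ hne
    rw [Matrix.add_apply, kronecker_apply, kronecker_apply] at hne
    by_cases hE : E i j = 0 ∨ k ≠ l
    · have h1 : (1 : Matrix ι ι 𝕜) i j * E' k l ≠ 0 := by
        rcases hE with hE | hkl
        · simpa only [hE, zero_mul, zero_add] using hne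
        · simpa only [one_apply_ne hkl, mul_zero, zero_add] using hne
      have hij : i = j := by
        by_contra hij
        exact left_ne_zero_of_mul h1 (one_apply_ne hij)
      have := h'.weight_eq k l (right_ne_zero_of_mul h1)
      subst hij
      dsimp only
      omega
    · push Not at hE
      have := h.weight_eq i j hE.1
      rw [hE.2]
      dsimp only
      omega
  commutator_eq := by
    simp only [conjTranspose_add, conjTranspose_kronecker, conjTranspose_one, add_mul, mul_add,
      ← mul_kronecker_mul, one_mul, mul_one]
    calc _ = (E * Eᴴ - Eᴴ * E) ⊗ₖ (1 : Matrix κ κ 𝕜)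
          + (1 : Matrix ι ι 𝕜) ⊗ₖ (E' * E'ᴴ - E'ᴴ * E') := by
          simp only [sub_eq_add_neg, add_kronecker, kronecker_add, ← neg_one_smul 𝕜 (_ * _),
            smul_kronecker, kronecker_smul]
          module
      _ = _ := by
          rw [h.commutator_eq, h'.commutator_eq, ← diagonal_one, ← diagonal_one,
            diagonal_kronecker_diagonal, diagonal_kronecker_diagonal, diagonal_add]
          simp

/-- `‖Eᴴ v‖² = ‖E v‖² + ∑ i, wt i * ‖v i‖²`, so `E v = 0` forces the last sum to be nonnegative. -/
theorem eq_zero_of_mulVec_eq_zero (h : IsRaisingMatrix E wt) {v : ι → 𝕜}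
    (hv : ∀ i, v i ≠ 0 → wt i < 0) (hEv : E *ᵥ v = 0) : v = 0 := by
  have hsum : star (Eᴴ *ᵥ v) ⬝ᵥ (Eᴴ *ᵥ v) = ∑ i, (wt i : 𝕜) * (star (v i) * v i) := by
    calc star (Eᴴ *ᵥ v) ⬝ᵥ (Eᴴ *ᵥ v) = star v ⬝ᵥ (E * Eᴴ - Eᴴ * E) *ᵥ v := by
          rw [star_mulVec, conjTranspose_conjTranspose, ← dotProduct_mulVec, mulVec_mulVec,
            sub_mulVec, ← mulVec_mulVec v Eᴴ E, hEv, mulVec_zero, sub_zero]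
      _ = _ := by
          rw [h.commutator_eq]
          simp only [dotProduct, mulVec_diagonal, Pi.star_apply]
          exact Finset.sum_congr rfl fun i _ => by ring
  have hterm : ∀ i, (wt i : 𝕜) * (star (v i) * v i) ≤ 0 := fun i => by
    by_cases hvi : v i = 0
    · simp [hvi]
    · exact mul_nonpos_of_nonpos_of_nonneg (by exact_mod_cast (hv i hvi).le)
        (star_mul_self_nonneg _)
  have hzero : ∑ i, (wt i : 𝕜) * (star (v i) * v i) = 0 :=
    le_antisymm (Finset.sum_nonpos fun i _ => hterm i) (hsum ▸ dotProduct_star_self_nonneg _)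
  ext i
  by_contra hvi
  have hi := (Finset.sum_eq_zero_iff_of_nonpos fun i _ => hterm i).1 hzero i (Finset.mem_univ i)
  have hwt : (wt i : 𝕜) ≠ 0 := by exact_mod_cast (hv i hvi).ne
  have hvi' : v i ≠ 0 := hvi
  simp [hwt, hvi'] at hi

theorem rank_mul_diagonal_indicator (h : IsRaisingMatrix E wt) {p : ι → Prop} [DecidablePred p]
    (hp : ∀ i, p i → wt i < 0) :
    (E * diagonal fun i => if p i then 1 else 0).rank = Fintype.card {i // p i} := by
  set D : Matrix ι ι 𝕜 := diagonal fun i => if p i then 1 else 0 with hD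
  have hker : (E * D).mulVecLin.ker = D.mulVecLin.ker := by
    ext v
    simp only [LinearMap.mem_ker, mulVecLin_apply, ← mulVec_mulVec]
    refine ⟨fun hv => h.eq_zero_of_mulVec_eq_zero (fun i hi => hp i ?_) hv,
      fun hv => by rw [hv, mulVec_zero]⟩
    by_contra hpi
    simp [hD, mulVec_diagonal, hpi] at hi
  have hrank : (E * D).rank = D.rank := by
    have h₁ := (E * D).mulVecLin.finrank_range_add_finrank_ker
    have h₂ := D.mulVecLin.finrank_range_add_finrank_ker
    rw [hker] at h₁
    exact Nat.add_right_cancel (h₁.trans h₂.symm)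
  rw [hrank, hD, rank_diagonal]
  simp

theorem rank_eq (h : IsRaisingMatrix E wt) :
    E.rank = Fintype.card {i // wt i < 0} + Fintype.card {i // 2 ≤ wt i} := by
  set P : Matrix ι ι 𝕜 := diagonal fun i => if wt i < 2 then 1 else 0 with hP
  have hPP : P * P = P := by simp [hP]
  have hcompl : 1 - P = diagonal fun i => if 2 ≤ wt i then 1 else 0 := by
    rw [hP, ← diagonal_one, diagonal_sub]
    congr 1
    ext i
    grind
  have hPE : P * E = E * diagonal fun i => if wt i < 0 then 1 else 0 := by
    ext i j
    rw [hP, diagonal_mul, mul_diagonal]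
    by_cases hij : E i j = 0
    · simp [hij]
    · have hwt : wt i < 2 ↔ wt j < 0 := by
        have := h.weight_eq i j hij
        omega
      simp [hwt]
  rw [rank_eq_rank_mul_add_rank_mul hPP hPE, hPE, h.rank_mul_diagonal_indicator fun _ => id,
    hcompl, ← rank_conjTranspose, conjTranspose_mul, diagonal_conjTranspose]
  congr 1
  rw [← h.conjTranspose.rank_mul_diagonal_indicator (p := fun i => 2 ≤ wt i)
    fun i hi => by simp only [Pi.neg_apply]; omega]
  congr 3
  ext i
  rw [Pi.star_apply]
  split_ifs <;> simp

theorem finrank_quotient_range {A : Type*} [CommRing A] [Algebra 𝕜 A] {a : A}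
    {b : Module.Basis ι 𝕜 A} (h : IsRaisingMatrix (Algebra.leftMulMatrix b a) wt) :
    Module.finrank 𝕜 (A ⧸ (LinearMap.mulLeft 𝕜 a).range) =
      Fintype.card {i // wt i = 0 ∨ wt i = 1} := by
  have : Module.Finite 𝕜 A := .of_basis b
  have hrank := h.rank_eq
  rw [rank_eq_finrank_range_toLin _ b b, Algebra.leftMulMatrix_apply, toLin_toMatrix] at hrank
  have hquot := (LinearMap.mulLeft 𝕜 a).range.finrank_quotient_add_finrank
  rw [Module.finrank_eq_card_basis b] at hquot
  change Module.finrank 𝕜 (LinearMap.mulLeft 𝕜 a).range = _ at hrank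
  have hcard : Fintype.card ι = Fintype.card {i // wt i = 0 ∨ wt i = 1}
      + (Fintype.card {i // wt i < 0} + Fintype.card {i // 2 ≤ wt i}) := by
    simp only [Fintype.card_subtype, Finset.card_filter, ← Finset.sum_add_distrib]
    rw [Fintype.card_eq_sum_ones]
    exact Finset.sum_congr rfl fun i _ => by grind
  omega

end IsRaisingMatrix

theorem leftMulMatrix_tmul {K A B : Type*} [CommRing K] [CommRing A] [CommRing B]
    [Algebra K A] [Algebra K B] (b : Module.Basis ι K A) (c : Module.Basis κ K B) (x : A) (y : B) :
    Algebra.leftMulMatrix (b.tensorProduct c) (x ⊗ₜ[K] y) =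
      Algebra.leftMulMatrix b x ⊗ₖ Algebra.leftMulMatrix c y := by
  simp only [Algebra.leftMulMatrix_apply]
  rw [← TensorProduct.toMatrix_map]
  congr 1
  ext
  simp

theorem IsRaisingMatrix.tmul_one_add_one_tmul {A B : Type*} [CommRing A] [CommRing B]
    [Algebra 𝕜 A] [Algebra 𝕜 B] {b : Module.Basis ι 𝕜 A} {c : Module.Basis κ 𝕜 B} {x : A} {y : B}
    {wt : ι → ℤ} {wt' : κ → ℤ} (hx : IsRaisingMatrix (Algebra.leftMulMatrix b x) wt)
    (hy : IsRaisingMatrix (Algebra.leftMulMatrix c y) wt') :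
    IsRaisingMatrix (Algebra.leftMulMatrix (b.tensorProduct c) (x ⊗ₜ[𝕜] 1 + 1 ⊗ₜ[𝕜] y))
      (fun i => wt i.1 + wt' i.2) := by
  rw [map_add, leftMulMatrix_tmul, leftMulMatrix_tmul, map_one, map_one]
  exact hx.kroneckerSum hy

/-- The weighted shift `e_j ↦ c (j + 1) • e_{j + 1}` on `e_0, …, e_{m - 1}`, where `e_m = 0`. -/
def weightedShift {R : Type*} [Zero R] (c : ℕ → R) (m : ℕ) : Matrix (Fin m) (Fin m) R :=
  of fun i j => if (i : ℕ) = j + 1 then c i else 0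

theorem weightedShift_mul_conjTranspose {R : Type*} [Semiring R] [StarRing R] {c : ℕ → R}
    (hc : c 0 = 0) (m : ℕ) :
    weightedShift c m * (weightedShift c m)ᴴ = diagonal fun i : Fin m => c i * star (c i) := by
  ext i j
  simp only [mul_apply, conjTranspose_apply, weightedShift, of_apply, diagonal_apply, Fin.ext_iff]
  rcases Nat.eq_zero_or_pos (i : ℕ) with hi | hi
  · simp [hi, hc]
  · rw [Finset.sum_eq_single ⟨i - 1, by omega⟩ (fun k _ hk => ?_) (by simp)]
    · grind [star_zero, mul_zero, zero_mul]
    · have : (i : ℕ) ≠ k + 1 := fun h => hk (Fin.ext (by simp [h]))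
      simp [this]

theorem conjTranspose_mul_weightedShift {R : Type*} [Semiring R] [StarRing R] {c : ℕ → R} {m : ℕ}
    (hc : c m = 0) : (weightedShift c m)ᴴ * weightedShift c m =
      diagonal fun i : Fin m => star (c (i + 1)) * c (i + 1) := by
  ext i j
  simp only [mul_apply, conjTranspose_apply, weightedShift, of_apply, diagonal_apply, Fin.ext_iff]
  rcases (Nat.succ_le_of_lt i.2).eq_or_lt with hi | hi
  · have hne (k : Fin m) : (k : ℕ) ≠ i + 1 := by omega
    have hcm : c (i + 1) = 0 := (congrArg c hi).trans hc
    simp [hne, hcm]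
  · rw [Finset.sum_eq_single ⟨i + 1, hi⟩ (fun k _ hk => ?_) (by simp)]
    · grind [star_zero, mul_zero, zero_mul]
    · have : (k : ℕ) ≠ i + 1 := fun h => hk (Fin.ext h)
      simp [this]

theorem isRaisingMatrix_weightedShift (m : ℕ) :
    IsRaisingMatrix (weightedShift (fun i => ((√(i * (m - i)) : ℝ) : 𝕜)) m)
      (fun i => 2 * (i : ℤ) + 1 - m) where
  weight_eq i j hij := by
    have : (i : ℕ) = j + 1 := by
      by_contra hne
      simp [weightedShift, hne] at hij
    omega
  commutator_eq := by
    have hsq {i : ℕ} (hi : i ≤ m) :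
        ((√(i * (m - i)) : ℝ) : 𝕜) * ((√(i * (m - i)) : ℝ) : 𝕜) = i * (m - i) := by
      have : (0 : ℝ) ≤ i * (m - i) := mul_nonneg i.cast_nonneg (sub_nonneg.2 (by exact_mod_cast hi))
      rw [← RCLike.ofReal_mul, Real.mul_self_sqrt this]
      push_cast
      rfl
    rw [weightedShift_mul_conjTranspose (by simp), conjTranspose_mul_weightedShift (by simp),
      diagonal_sub]
    congr 1
    ext i
    rw [RCLike.star_def, RCLike.conj_ofReal, RCLike.conj_ofReal, hsq i.2.le, hsq i.2]
    push_cast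
    ring

end RaisingMatrix

section NilpotentExp

variable {A : Type*} [CommRing A] [Algebra ℚ A]

theorem exists_exp_eq_one_add_add_sq_mul {a : A} (ha : IsNilpotent a) :
    ∃ c, IsNilpotent.exp a = 1 + a + a ^ 2 * c := by
  obtain ⟨k, hk⟩ := ha
  refine ⟨∑ i ∈ Finset.range k, ((i + 2).factorial : ℚ)⁻¹ • a ^ i, ?_⟩
  rw [IsNilpotent.exp_eq_sum (k := k + 2) (pow_eq_zero_of_le (by omega) hk),
    Finset.sum_range_succ', Finset.sum_range_succ', Finset.mul_sum]
  simp only [mul_smul_comm, ← pow_add]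
  simp only [zero_add, pow_zero, pow_one, Nat.factorial_zero, Nat.factorial_one, Nat.cast_one,
    inv_one, one_smul, add_comm 2]
  ring

theorem associated_exp_sub_one {a : A} (ha : IsNilpotent a) :
    Associated a (IsNilpotent.exp a - 1) := by
  obtain ⟨c, hc⟩ := exists_exp_eq_one_add_add_sq_mul ha
  have hunit : IsUnit (1 + a * c) := (Commute.all _ _).isNilpotent_mul_right ha |>.isUnit_one_add
  exact ⟨hunit.unit, by rw [hunit.unit_spec, hc]; ring⟩

/-- Multiplying `1 + x` by `exp (-x)` moves it to `1 + x ^ 2 * c`, whose nilpotent part is of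
smaller order. -/
theorem exists_exp_eq_one_add {x : A} (hx : IsNilpotent x) :
    ∃ n, IsNilpotent n ∧ IsNilpotent.exp n = 1 + x := by
  obtain ⟨k, hk⟩ := hx
  induction k using Nat.strong_induction_on generalizing x with
  | _ k ih =>
    rcases Nat.lt_or_ge k 2 with hk2 | hk2
    · have hx0 : x = 0 := by simpa using pow_eq_zero_of_le (Nat.le_of_lt_succ hk2) hk
      exact ⟨0, .zero, by rw [IsNilpotent.exp_zero, hx0, add_zero]⟩
    · have hx : IsNilpotent x := ⟨k, hk⟩
      obtain ⟨c, hc⟩ := exists_exp_eq_one_add_add_sq_mul hx.neg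
      have hy : (x ^ 2 * (-1 + (1 + x) * c)) ^ (k - 1) = 0 := by
        rw [mul_pow, ← pow_mul, pow_eq_zero_of_le (by omega) hk, zero_mul]
      obtain ⟨n, hn, hexp⟩ := ih (k - 1) (by omega) hy
      refine ⟨n + x, (Commute.all n x).isNilpotent_add hn hx, ?_⟩
      rw [IsNilpotent.exp_add_of_commute (Commute.all n x) hn hx, hexp]
      have hinv := IsNilpotent.exp_neg_mul_exp_self hx
      rw [hc] at hinv
      linear_combination (1 + x) * hinv

end NilpotentExp

section NilpotentGenerator

variable {K A : Type*} [Field K] [CommRing A] [Algebra K A] {n : A} {m : ℕ}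

theorem minpoly_eq_X_pow (hn : ∀ k, n ^ k = 0 ↔ m ≤ k) : minpoly K n = Polynomial.X ^ m := by
  have hdvd : minpoly K n ∣ Polynomial.X ^ m := minpoly.dvd K n (by simp [(hn m).2 le_rfl])
  obtain ⟨j, hj, hassoc⟩ := (dvd_prime_pow Polynomial.prime_X m).1 hdvd
  have hint : IsIntegral K n := ⟨Polynomial.X ^ m, Polynomial.monic_X_pow m, by
    simp [(hn m).2 le_rfl]⟩
  have heq : minpoly K n = Polynomial.X ^ j :=
    Polynomial.eq_of_monic_of_associated (minpoly.monic hint) (Polynomial.monic_X_pow j) hassoc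
  have hnj : n ^ j = 0 := by simpa [heq] using minpoly.aeval K n
  rw [heq, hj.antisymm ((hn j).1 hnj)]

theorem exists_basis_pow (hn : ∀ k, n ^ k = 0 ↔ m ≤ k) (hgen : Algebra.adjoin K {n} = ⊤) :
    ∃ b : Module.Basis (Fin m) K A, ∀ i, b i = n ^ (i : ℕ) := by
  have hint : IsIntegral K n := ⟨Polynomial.X ^ m, Polynomial.monic_X_pow m, by
    simp [(hn m).2 le_rfl]⟩
  have hdim : (PowerBasis.ofAdjoinEqTop hint hgen).dim = m := by
    rw [PowerBasis.ofAdjoinEqTop_dim, minpoly_eq_X_pow hn, Polynomial.natDegree_X_pow]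
  exact ⟨(PowerBasis.ofAdjoinEqTop hint hgen).basis.reindex (finCongr hdim), fun i => by
    rw [Module.Basis.reindex_apply, PowerBasis.basis_eq_pow]
    rfl⟩

theorem exists_basis_leftMulMatrix_eq_weightedShift (hn : ∀ k, n ^ k = 0 ↔ m ≤ k)
    (hgen : Algebra.adjoin K {n} = ⊤) {c : ℕ → K} (hc : ∀ i, 0 < i → i < m → c i ≠ 0) :
    ∃ b : Module.Basis (Fin m) K A, Algebra.leftMulMatrix b n = weightedShift c m := by
  obtain ⟨b, hb⟩ := exists_basis_pow hn hgen
  have hprod (i : Fin m) : IsUnit (∏ k ∈ Finset.range i, c (k + 1))⁻¹ :=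
    (inv_ne_zero (Finset.prod_ne_zero_iff.2 fun k hk =>
      hc _ k.succ_pos (by rw [Finset.mem_range] at hk; omega))).isUnit
  refine ⟨b.isUnitSMul hprod, ?_⟩
  ext i j
  rw [Algebra.leftMulMatrix_eq_repr_mul, weightedShift, Matrix.of_apply]
  rcases (Nat.succ_le_of_lt j.2).eq_or_lt with hj | hj
  · have hij : (i : ℕ) ≠ j + 1 := by omega
    have hzero : n ^ (j + 1 : ℕ) = 0 := (hn _).2 hj.ge
    rw [Module.Basis.isUnitSMul_apply, hb, mul_smul_comm, ← pow_succ', hzero, smul_zero, map_zero,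
      Finsupp.zero_apply, if_neg hij]
  · have hmul : n * b.isUnitSMul hprod j = c (j + 1) • b.isUnitSMul hprod ⟨j + 1, hj⟩ := by
      have hcj := hc (j + 1) j.1.succ_pos hj
      rw [Module.Basis.isUnitSMul_apply, Module.Basis.isUnitSMul_apply, hb, hb, mul_smul_comm,
        ← pow_succ', smul_smul, Finset.prod_range_succ, mul_inv, mul_left_comm,
        mul_inv_cancel₀ hcj, mul_one]
    rw [hmul, map_smul, Module.Basis.repr_self, Finsupp.smul_single, Finsupp.single_apply,
      smul_eq_mul, mul_one]
    grind

end NilpotentGenerator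

theorem exp_mem_subalgebra {K A : Type*} [Field K] [CharZero K] [CommRing A] [Algebra K A]
    [Algebra ℚ A] {S : Subalgebra K A} {n : A} (hn : IsNilpotent n) (hS : n ∈ S) :
    IsNilpotent.exp n ∈ S := by
  obtain ⟨k, hk⟩ := hn
  rw [IsNilpotent.exp_eq_sum hk]
  refine sum_mem fun i _ => ?_
  rw [← Rat.cast_smul_eq_qsmul K]
  exact S.smul_mem (pow_mem hS i) _

section LaurentQuotient

variable {K : Type} [Field K] {z : K}

theorem not_isUnit_T_one_sub_C (hz : z ≠ 0) : ¬ IsUnit (T 1 - C z : K[T;T⁻¹]) := fun h => by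
  have := h.map (eval₂ (RingHom.id K) (Units.mk0 z hz))
  simp at this

theorem T_one_sub_C_ne_zero (z : K) : (T 1 - C z : K[T;T⁻¹]) ≠ 0 := by
  rw [← Polynomial.toLaurent_X, ← Polynomial.toLaurent_C, ← map_sub]
  exact Polynomial.toLaurent_ne_zero.2 (Polynomial.X_sub_C_ne_zero z)

theorem clsOf_pow_eq_zero_iff (hz : z ≠ 0) (m k : ℕ) :
    clsOf K ((T 1 - C z) ^ m) (T 1 - C z) ^ k = 0 ↔ m ≤ k := by
  rw [clsOf, ← map_pow, Ideal.Quotient.eq_zero_iff_dvd,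
    pow_dvd_pow_iff (T_one_sub_C_ne_zero z) (not_isUnit_T_one_sub_C hz)]

theorem adjoin_clsOf_T (p : K[T;T⁻¹]) :
    Algebra.adjoin K {clsOf K p (T 1), clsOf K p (T (-1))} = ⊤ := by
  set S := Algebra.adjoin K {clsOf K p (T 1), clsOf K p (T (-1))}
  refine (Algebra.eq_top_iff).2 fun x => ?_
  obtain ⟨f, rfl⟩ := Ideal.Quotient.mk_surjective x
  induction f using LaurentPolynomial.induction_on' with
  | add f g hf hg =>
    rw [map_add]
    exact add_mem hf hg
  | C_mul_T n a =>
    rw [← smul_eq_C_mul]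
    refine Subalgebra.smul_mem S (x := clsOf K p (T n)) ?_ a
    obtain ⟨k, rfl | rfl⟩ := n.eq_nat_or_neg
    · have h := pow_mem (show clsOf K p (T 1) ∈ S from Algebra.subset_adjoin (by simp)) k
      rwa [clsOf, ← map_pow, T_pow, mul_one] at h
    · have h := pow_mem (show clsOf K p (T (-1)) ∈ S from Algebra.subset_adjoin (by simp)) k
      rwa [clsOf, ← map_pow, T_pow, mul_neg_one] at h

variable [CharZero K]

theorem adjoin_eq_top_of_clsOf_T_eq_smul_exp (hz : z ≠ 0) {p : K[T;T⁻¹]} {n : LQuot K p}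
    (hn : IsNilpotent n) (hT : clsOf K p (T 1) = z • IsNilpotent.exp n) :
    Algebra.adjoin K {n} = ⊤ := by
  have hTinv : clsOf K p (T (-1)) = z⁻¹ • IsNilpotent.exp (-n) := by
    have hleft : clsOf K p (T (-1)) * clsOf K p (T 1) = 1 := by
      rw [clsOf, clsOf, ← map_mul, ← T_add, neg_add_cancel, T_zero, map_one]
    have hright : clsOf K p (T 1) * z⁻¹ • IsNilpotent.exp (-n) = 1 := by
      rw [hT, smul_mul_smul_comm, mul_inv_cancel₀ hz, IsNilpotent.exp_mul_exp_neg_self hn,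
        one_smul]
    exact left_inv_eq_right_inv hleft hright
  have hmem : n ∈ Algebra.adjoin K {n} := Algebra.self_mem_adjoin_singleton K n
  rw [← top_le_iff, ← adjoin_clsOf_T, hT, hTinv, Algebra.adjoin_le_iff]
  rintro _ (rfl | rfl)
  · exact Subalgebra.smul_mem _ (exp_mem_subalgebra hn hmem) z
  · exact Subalgebra.smul_mem _ (exp_mem_subalgebra hn.neg (neg_mem hmem)) z⁻¹

theorem exists_clsOf_T_eq_smul_exp (hz : z ≠ 0) (m : ℕ) :
    ∃ n : LQuot K ((T 1 - C z) ^ m), clsOf K _ (T 1) = z • IsNilpotent.exp n ∧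
      ∀ k, n ^ k = 0 ↔ m ≤ k := by
  set x : LQuot K ((T 1 - C z) ^ m) := z⁻¹ • clsOf K _ (T 1 - C z) with hx
  have hxpow (k : ℕ) : x ^ k = 0 ↔ m ≤ k := by
    rw [hx, smul_pow, smul_eq_zero_iff_right (pow_ne_zero k (inv_ne_zero hz)),
      clsOf_pow_eq_zero_iff hz]
  obtain ⟨n, hn, hexp⟩ := exists_exp_eq_one_add ⟨m, (hxpow m).2 le_rfl⟩
  have hassoc : Associated n x := by simpa [hexp] using associated_exp_sub_one hn
  refine ⟨n, ?_, fun k => by rw [hassoc.pow_pow.eq_zero_iff, hxpow]⟩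
  have hC : clsOf K ((T 1 - C z) ^ m) (C z) = z • 1 :=
    Algebra.algebraMap_eq_smul_one (A := LQuot K ((T 1 - C z) ^ m)) z
  rw [hexp, smul_add, hx, smul_inv_smul₀ hz, ← hC, clsOf, clsOf, clsOf, ← map_add,
    add_sub_cancel]

end LaurentQuotient

theorem exists_clsOf_T_eq_smul_exp_and_isRaisingMatrix {𝕜 : Type} [RCLike 𝕜] {z : 𝕜} (hz : z ≠ 0)
    (m : ℕ) : ∃ (n : LQuot 𝕜 ((T 1 - C z) ^ m)) (b : Module.Basis (Fin m) 𝕜 _),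
      IsNilpotent n ∧ clsOf 𝕜 _ (T 1) = z • IsNilpotent.exp n ∧
        IsRaisingMatrix (Algebra.leftMulMatrix b n) (fun i => 2 * (i : ℤ) + 1 - m) := by
  obtain ⟨n, hT, hpow⟩ := exists_clsOf_T_eq_smul_exp hz m
  have hn : IsNilpotent n := ⟨m, (hpow m).2 le_rfl⟩
  have hsqrt (i : ℕ) (hi : 0 < i) (him : i < m) : ((√(i * (m - i)) : ℝ) : 𝕜) ≠ 0 := by
    have : (0 : ℝ) < i * (m - i) :=
      mul_pos (Nat.cast_pos.2 hi) (sub_pos.2 (Nat.cast_lt.2 him))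
    exact RCLike.ofReal_ne_zero.2 (Real.sqrt_ne_zero'.2 this)
  obtain ⟨b, hb⟩ := exists_basis_leftMulMatrix_eq_weightedShift hpow
    (adjoin_eq_top_of_clsOf_T_eq_smul_exp hz hn hT) hsqrt
  exact ⟨n, b, hn, hT, hb ▸ isRaisingMatrix_weightedShift m⟩

section TensorProductExp

variable {K A B : Type*} [CommRing K] [CommRing A] [CommRing B] [Algebra K A] [Algebra K B]
  {a : A} {b : B}

theorem isNilpotent_tmul_one_add_one_tmul (ha : IsNilpotent a) (hb : IsNilpotent b) :
    IsNilpotent (a ⊗ₜ[K] 1 + 1 ⊗ₜ[K] b) :=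
  (Commute.all _ _).isNilpotent_add
    (ha.map (Algebra.TensorProduct.includeLeft : A →ₐ[K] A ⊗[K] B))
    (hb.map (Algebra.TensorProduct.includeRight : B →ₐ[K] A ⊗[K] B))

theorem exp_tmul_exp [Algebra ℚ A] [Algebra ℚ B] (ha : IsNilpotent a) (hb : IsNilpotent b) :
    IsNilpotent.exp a ⊗ₜ[K] IsNilpotent.exp b = IsNilpotent.exp (a ⊗ₜ[K] 1 + 1 ⊗ₜ[K] b) := by
  have ha' := IsNilpotent.map_exp ha (Algebra.TensorProduct.includeLeft : A →ₐ[K] A ⊗[K] B)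
  have hb' := IsNilpotent.map_exp hb (Algebra.TensorProduct.includeRight : B →ₐ[K] A ⊗[K] B)
  have hl := ha.map (Algebra.TensorProduct.includeLeft : A →ₐ[K] A ⊗[K] B)
  have hr := hb.map (Algebra.TensorProduct.includeRight : B →ₐ[K] A ⊗[K] B)
  simp only [Algebra.TensorProduct.includeLeft_apply, Algebra.TensorProduct.includeRight_apply]
    at ha' hb' hl hr
  rw [IsNilpotent.exp_add_of_commute (Commute.all _ _) hl hr, ← ha', ← hb',
    Algebra.TensorProduct.tmul_mul_tmul, mul_one, one_mul]

end TensorProductExp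

theorem range_mulLeft_eq_of_associated {K A : Type*} [CommSemiring K] [CommSemiring A]
    [Algebra K A] {a b : A} (h : Associated a b) :
    (LinearMap.mulLeft K a).range = (LinearMap.mulLeft K b).range := by
  ext x
  simp only [LinearMap.mem_range, LinearMap.mulLeft_apply, eq_comm (b := x)]
  exact h.dvd_iff_dvd_left

section Holonomy

variable {K A B C : Type*} [CommRing K] [CommRing A] [CommRing B] [CommRing C]
  [Algebra K A] [Algebra K B] [Algebra K C]

variable (K) in
/-- The holonomy subspace of `A ⊗ B ⊗ C` when the Laurent variable acts on the three factors as
multiplication by `s`, `t` and `u`. -/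
def mulHolonomy (s : A) (t : B) (u : C) : Submodule K ((A ⊗[K] B) ⊗[K] C) :=
  Submodule.span K {x | ∃ a b c, x = (a ⊗ₜ b) ⊗ₜ c - ((s * a) ⊗ₜ (t * b)) ⊗ₜ (u * c)}

theorem mulHolonomy_eq_range_mulLeft (s : A) (t : B) (u : C) :
    mulHolonomy K s t u = (LinearMap.mulLeft K (1 - (s ⊗ₜ[K] t) ⊗ₜ[K] u)).range := by
  have hmul (a : A) (b : B) (c : C) :
      LinearMap.mulLeft K (1 - (s ⊗ₜ[K] t) ⊗ₜ[K] u) ((a ⊗ₜ b) ⊗ₜ c) =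
        (a ⊗ₜ b) ⊗ₜ c - ((s * a) ⊗ₜ (t * b)) ⊗ₜ (u * c) := by
    rw [LinearMap.mulLeft_apply, sub_mul, one_mul, Algebra.TensorProduct.tmul_mul_tmul,
      Algebra.TensorProduct.tmul_mul_tmul]
  apply le_antisymm
  · refine Submodule.span_le.2 ?_
    rintro _ ⟨a, b, c, rfl⟩
    exact ⟨_, hmul a b c⟩
  · rintro _ ⟨x, rfl⟩
    induction x using TensorProduct.induction_on with
    | zero => simp
    | add x y hx hy =>
      rw [map_add]
      exact add_mem hx hy
    | tmul y c =>
      induction y using TensorProduct.induction_on with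
      | zero => simp
      | add y y' hy hy' =>
        rw [TensorProduct.add_tmul, map_add]
        exact add_mem hy hy'
      | tmul a b => exact Submodule.subset_span ⟨a, b, c, hmul a b c⟩

theorem mulHolonomy_smul_exp [Algebra ℚ A] [Algebra ℚ B] [Algebra ℚ C] {z₁ z₂ z₃ : K}
    (hz : z₁ * z₂ * z₃ = 1) {a : A} {b : B} {c : C}
    (ha : IsNilpotent a) (hb : IsNilpotent b) (hc : IsNilpotent c) :
    mulHolonomy K (z₁ • IsNilpotent.exp a) (z₂ • IsNilpotent.exp b) (z₃ • IsNilpotent.exp c) =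
      (LinearMap.mulLeft K ((a ⊗ₜ[K] 1 + 1 ⊗ₜ[K] b) ⊗ₜ[K] 1 + 1 ⊗ₜ[K] c)).range := by
  have hab := isNilpotent_tmul_one_add_one_tmul (K := K) ha hb
  have hassoc := associated_exp_sub_one (isNilpotent_tmul_one_add_one_tmul (K := K) hab hc)
  rw [mulHolonomy_eq_range_mulLeft, TensorProduct.smul_tmul_smul, TensorProduct.smul_tmul_smul,
    hz, one_smul, exp_tmul_exp ha hb, exp_tmul_exp hab hc, ← neg_sub,
    range_mulLeft_eq_of_associated hassoc.neg_right]

end Holonomy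

theorem finrank_trip_quotient_holSub {𝕜 : Type} [RCLike 𝕜] {z₁ z₂ z₃ : 𝕜} (hz : z₁ * z₂ * z₃ = 1)
    (m₁ m₂ m₃ : ℕ) :
    Module.finrank 𝕜 (Trip 𝕜 ((T 1 - C z₁) ^ m₁) ((T 1 - C z₂) ^ m₂) ((T 1 - C z₃) ^ m₃) ⧸
      holSub 𝕜 ((T 1 - C z₁) ^ m₁) ((T 1 - C z₂) ^ m₂) ((T 1 - C z₃) ^ m₃)) =
    Fintype.card {x : (Fin m₁ × Fin m₂) × Fin m₃ //
      (x.1.1 + x.1.2 + x.2 : ℕ) = (m₁ + m₂ + m₃ - 2) / 2} := by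
  have hz₁₂ : z₁ * z₂ ≠ 0 := left_ne_zero_of_mul (hz.trans_ne one_ne_zero)
  have hz₃ : z₃ ≠ 0 := right_ne_zero_of_mul (hz.trans_ne one_ne_zero)
  obtain ⟨n₁, b₁, hn₁, hT₁, hE₁⟩ :=
    exists_clsOf_T_eq_smul_exp_and_isRaisingMatrix (left_ne_zero_of_mul hz₁₂) m₁
  obtain ⟨n₂, b₂, hn₂, hT₂, hE₂⟩ :=
    exists_clsOf_T_eq_smul_exp_and_isRaisingMatrix (right_ne_zero_of_mul hz₁₂) m₂
  obtain ⟨n₃, b₃, hn₃, hT₃, hE₃⟩ := exists_clsOf_T_eq_smul_exp_and_isRaisingMatrix hz₃ m₃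
  change Module.finrank 𝕜 (_ ⧸ mulHolonomy 𝕜 (clsOf 𝕜 ((T 1 - C z₁) ^ m₁) (T 1))
    (clsOf 𝕜 ((T 1 - C z₂) ^ m₂) (T 1)) (clsOf 𝕜 ((T 1 - C z₃) ^ m₃) (T 1))) = _
  rw [hT₁, hT₂, hT₃, mulHolonomy_smul_exp hz hn₁ hn₂ hn₃,
    ((hE₁.tmul_one_add_one_tmul hE₂).tmul_one_add_one_tmul hE₃).finrank_quotient_range]
  exact Fintype.card_congr (Equiv.subtypeEquivRight fun x => by omega)

section Counting

theorem card_fin_triple_sum_eq (a b c s : ℕ) :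
    Fintype.card {x : (Fin a × Fin b) × Fin c // (x.1.1 + x.1.2 + x.2 : ℕ) = s} =
      ∑ i ∈ Finset.range a, (min (s + 1 - i) b - (s + 1 - i - c)) := by
  have hsigma : ∑ i ∈ Finset.range a, (min (s + 1 - i) b - (s + 1 - i - c)) =
      ((Finset.range a).sigma fun i => Finset.Ico (s + 1 - i - c) (min (s + 1 - i) b)).card := by
    simp
  rw [hsigma, Fintype.card_subtype]
  refine Finset.card_bij (fun x _ => ⟨x.1.1, x.1.2⟩) ?_ ?_ ?_
  · rintro ⟨⟨i, j⟩, k⟩ hx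
    simp only [Finset.mem_filter, Finset.mem_univ, true_and, Finset.mem_sigma, Finset.mem_range,
      Finset.mem_Ico] at hx ⊢
    omega
  · rintro ⟨⟨i, j⟩, k⟩ hx ⟨⟨i', j'⟩, k'⟩ hx' heq
    simp only [Finset.mem_filter, Finset.mem_univ, true_and, Sigma.mk.injEq, heq_eq_eq]
      at hx hx' heq
    simp only [Prod.mk.injEq, Fin.ext_iff]
    omega
  · rintro ⟨i, j⟩ hij
    simp only [Finset.mem_sigma, Finset.mem_range, Finset.mem_Ico] at hij
    refine ⟨⟨(⟨i, by omega⟩, ⟨j, by omega⟩), ⟨s - i - j, by omega⟩⟩, ?_, rfl⟩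
    simp only [Finset.mem_filter, Finset.mem_univ, true_and]
    omega

theorem card_fin_triple_central_sum (m : ℕ) :
    Fintype.card {x : (Fin m × Fin m) × Fin m //
      (x.1.1 + x.1.2 + x.2 : ℕ) = (m + m + m - 2) / 2} = (3 * m ^ 2 + 1) / 4 := by
  obtain ⟨h, e, he, rfl⟩ : ∃ h e, e < 2 ∧ m = h + (h + e) :=
    ⟨m / 2, m % 2, m.mod_lt two_pos, by omega⟩
  rw [card_fin_triple_sum_eq, Finset.sum_range_add]
  calc _ = ∑ i ∈ Finset.range h, (h + e + i) + ∑ i ∈ Finset.range (h + e), (2 * h + e - i) := by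
        congr 1 <;> refine Finset.sum_congr rfl fun i hi => ?_ <;>
          rw [Finset.mem_range] at hi <;> omega
    _ = ∑ i ∈ Finset.range h, (h + e + i + (2 * h + e - i)) + e * (h + e) := by
        rw [Finset.sum_range_add, ← add_assoc, ← Finset.sum_add_distrib]
        congr 1
        interval_cases e
        · simp
        · rw [Finset.sum_range_one]
          omega
    _ = h * (3 * h + 2 * e) + e * (h + e) := by
        congr 1
        rw [Finset.sum_congr rfl (g := fun _ => 3 * h + 2 * e), Finset.sum_const,
          Finset.card_range, smul_eq_mul]
        intro i hi
        rw [Finset.mem_range] at hi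
        omega
    _ = (3 * (h + (h + e)) ^ 2 + 1) / 4 := by
        interval_cases e <;> ring_nf <;> omega

end Counting

theorem stmt18_general (z : ℂ) (hz3 : z ^ 3 = 1) (m : ℕ) :
    Module.finrank ℂ (Vq z m) = (3 * m ^ 2 + 1) / 4 := by
  rw [finrank_trip_quotient_holSub (by rw [← hz3]; ring), card_fin_triple_central_sum]

theorem stmt18 (z : ℂ) (hz3 : z ^ 3 = 1) (hz1 : z ≠ 1) :
    Module.finrank ℂ (Vq z 2) = 3 ∧ Module.finrank ℂ (Vq z 3) = 7 ∧
      Module.finrank ℂ (Vq z 4) = 12 :=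
  ⟨stmt18_general z hz3 2, stmt18_general z hz3 3, stmt18_general z hz3 4⟩
end
end
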